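/- arXiv:1707.01639 — 2 statements merged into one kernel-verified Lean document; each statement's English description precedes it below -/
import Mathlib

section
/- Let $\omega \in A_1$, $d\mu = \omega\,dx$, and $0 < r < 1$. Suppose $f$ is locally integrable with $\sup_Q \inf_c \left(\frac{1}{\mu(Q)}\int_Q \left(\frac{|f(x)-c|}{\omega(x)}\right)^r d\mu(x)\right)^{1/r} = 1$, and for each cube $Q$ let $c_Q$ minimize $\int_Q (|f(x)-c|/\omega(x))^r d\mu(x)$. Then there exist positive constants $c_1, c_2$ (depending only on $n$, $r$, and $[\omega]_{A_1}$) such that for all cubes $Q$ and all $t > 0$, $\mu(\{x \in Q : |f(x)-c_Q|/\omega(x) > t\}) \leq c_1 e^{-c_2 t}\,\mu(Q)$. -/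
open MeasureTheory Real
noncomputable section

abbrev Rn (n : ℕ) := EuclideanSpace ℝ (Fin n)

def cube {n : ℕ} (c : Rn n) (r : ℝ) : Set (Rn n) := {y | ∀ i, |y i - c i| ≤ r / 2}

def wMeas {n : ℕ} (ω : Rn n → ℝ) (S : Set (Rn n)) : ℝ := ∫ x in S, ω x

def avg {n : ℕ} (f : Rn n → ℝ) (c : Rn n) (r : ℝ) : ℝ := (∫ x in cube c r, f x) / r ^ n

def IsA1 {n : ℕ} (ω : Rn n → ℝ) (A : ℝ) : Prop :=
  (∀ x, 0 < ω x) ∧ LocallyIntegrable ω volume ∧ 1 ≤ A ∧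
  ∀ (c : Rn n) (r : ℝ), 0 < r →
    ∀ᵐ x ∂(volume : Measure (Rn n)), x ∈ cube c r → wMeas ω (cube c r) / r ^ n ≤ A * ω x

def IsAp {n : ℕ} (ω : Rn n → ℝ) (p A : ℝ) : Prop :=
  (∀ x, 0 < ω x) ∧ LocallyIntegrable ω volume ∧
  ∀ (c : Rn n) (r : ℝ), 0 < r →
    (wMeas ω (cube c r) / r ^ n) *
      ((∫ x in cube c r, ω x ^ (-(1 / (p - 1)))) / r ^ n) ^ (p - 1) ≤ A

def IsAinf {n : ℕ} (ω : Rn n → ℝ) : Prop := ∃ p A, 1 < p ∧ IsAp ω p A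


open Metric Set in
lemma cz_cover {n : ℕ} (E : Set (Fin n → ℝ)) (c : Fin n → ℝ) (R : ℝ) (hR : 0 < R)
    (hE : ∀ x ∈ closedBall c R, 4 * volume (E ∩ closedBall x R) ≤ volume (closedBall x R)) :
    ∃ (u : Set (Fin n → ℝ)) (ρ : (Fin n → ℝ) → ℝ), u.Countable ∧
      (∀ b ∈ u, 0 < ρ b ∧ b ∈ closedBall c R ∧ 6 * ρ b ≤ R ∧
        4 * volume (E ∩ closedBall b (6 * ρ b)) ≤ volume (closedBall b (6 * ρ b)) ∧
        volume (closedBall b (ρ b)) ≤ 4 * volume (E ∩ closedBall b (ρ b))) ∧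
      u.PairwiseDisjoint (fun b => closedBall b (ρ b)) ∧
      volume ((E ∩ closedBall c R) \ ⋃ b ∈ u, closedBall b (6 * ρ b)) = 0 := by
  classical
  set P : (Fin n → ℝ) → ℕ → Prop := fun x k =>
    volume (closedBall x (R / 6 ^ k)) < 4 * volume (E ∩ closedBall x (R / 6 ^ k)) with hP
  set t : Set (Fin n → ℝ) := {x | x ∈ closedBall c R ∧ ∃ k, P x k} with ht
  have hk : ∀ x, ∃ k : ℕ, x ∈ t → (P x (k + 1) ∧ ¬ P x k) := by
    intro x
    by_cases hx : x ∈ t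
    · have h1 := Nat.find_spec hx.2
      have h0 : Nat.find hx.2 ≠ 0 := by
        intro h
        rw [h] at h1
        have := hE x hx.1
        simp only [hP, pow_zero, div_one] at h1
        exact absurd this (not_le.2 h1)
      obtain ⟨k, hk⟩ := Nat.exists_eq_succ_of_ne_zero h0
      refine ⟨k, fun _ => ⟨by rw [hk] at h1; exact h1, Nat.find_min hx.2 (by omega)⟩⟩
    · exact ⟨0, fun h => absurd h hx⟩
  choose k hk using hk
  set ρ : (Fin n → ℝ) → ℝ := fun x => R / 6 ^ (k x + 1) with hρ
  have hρ6 : ∀ x, 6 * ρ x = R / 6 ^ (k x) := by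
    intro x
    simp only [hρ, pow_succ]
    field_simp
  obtain ⟨u, hut, hud, huc⟩ := Vitali.exists_disjoint_subfamily_covering_enlargement_closedBall
    t (fun x => x) ρ R (by
      intro a _
      exact div_le_self hR.le (one_le_pow₀ (by norm_num))) 6 (by norm_num)
  have hρpos : ∀ x, 0 < ρ x := fun x => by simp only [hρ]; positivity
  refine ⟨u, ρ, ?_, ?_, hud, ?_⟩
  · refine hud.countable_of_nonempty_interior ?_
    intro b _
    exact ⟨b, ball_subset_interior_closedBall (mem_ball_self (hρpos b))⟩
  · intro b hb
    refine ⟨hρpos b, (hut hb).1, ?_, ?_, ?_⟩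
    · rw [hρ6]
      exact div_le_self hR.le (one_le_pow₀ (by norm_num))
    · have := (hk b (hut hb)).2
      rw [hρ6]
      exact not_lt.1 this
    · exact (hk b (hut hb)).1.le
  · have hd := IsUnifLocDoublingMeasure.ae_tendsto_measure_inter_div
      (volume : Measure (Fin n → ℝ)) (E ∩ closedBall c R) 1
    have hd2 : ∀ᵐ x ∂(volume.restrict (E ∩ closedBall c R)), ∃ k, P x k := by
      filter_upwards [hd] with x hx
      have hlim : Filter.Tendsto (fun k : ℕ => R / 6 ^ k) Filter.atTop (nhdsWithin 0 (Ioi 0)) := by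
        rw [tendsto_nhdsWithin_iff]
        constructor
        · have := (tendsto_pow_atTop_nhds_zero_of_lt_one (r := (1/6 : ℝ)) (by norm_num)
            (by norm_num)).const_mul R
          simp only [mul_zero] at this
          refine this.congr (fun k => ?_)
          rw [one_div, inv_pow, div_eq_mul_inv]
        · exact Filter.Eventually.of_forall (fun k => by simp only [mem_Ioi]; positivity)
      have h1 := hx (fun _ => x) _ hlim
        (Filter.Eventually.of_forall (fun k => mem_closedBall_self (by positivity)))
      have h2 := (h1.eventually (lt_mem_nhds (show (1/4 : ENNReal) < 1 by
        rw [ENNReal.div_lt_iff] <;> norm_num))).exists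
      obtain ⟨k, hk⟩ := h2
      refine ⟨k, ?_⟩
      have hpos : 0 < volume (closedBall x (R / 6 ^ k)) :=
        measure_closedBall_pos _ _ (by positivity)
      have hfin : volume (closedBall x (R / 6 ^ k)) < ⊤ := measure_closedBall_lt_top
      rw [ENNReal.lt_div_iff_mul_lt (Or.inl hpos.ne') (Or.inl hfin.ne)] at hk
      have h3 : volume (E ∩ closedBall c R ∩ closedBall x (R / 6 ^ k))
          ≤ volume (E ∩ closedBall x (R / 6 ^ k)) :=
        measure_mono (inter_subset_inter_left _ inter_subset_left)
      have h4 := hk.trans_le h3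
      simp only [hP]
      calc volume (closedBall x (R / 6 ^ k))
          = 4 * (1/4 * volume (closedBall x (R / 6 ^ k))) := by
            rw [← mul_assoc, one_div, ENNReal.mul_inv_cancel (by norm_num) (by norm_num), one_mul]
        _ < _ := by
          rw [ENNReal.mul_lt_mul_iff_right (by norm_num) (by norm_num)]
          exact h4
    have hd3 : volume.restrict (E ∩ closedBall c R) {x | ¬ ∃ k, P x k} = 0 := hd2
    have hd4 : volume ({x | ¬ ∃ k, P x k} ∩ (E ∩ closedBall c R)) = 0 :=
      le_antisymm ((Measure.le_restrict_apply _ _).trans hd3.le) bot_le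
    refine measure_mono_null ?_ hd4
    rintro x ⟨hx, hxu⟩
    refine ⟨?_, hx⟩
    intro hxk
    apply hxu
    obtain ⟨b, hb, hbs⟩ := huc x ⟨hx.2, hxk⟩
    exact mem_biUnion hb (hbs (mem_closedBall_self (hρpos x).le))

structure Good (n : ℕ) (A lam : ℝ) (δ : ENNReal) (μ : Measure (Fin n → ℝ))
    (ω f : (Fin n → ℝ) → ℝ) (cQ : (Fin n → ℝ) → ℝ → ℝ) : Prop where
  hA : 1 ≤ A
  hlam : 0 < lam
  hδ : 8 * ENNReal.ofReal A ^ 3 * 12 ^ n * δ ≤ 1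
  ac : μ ≪ volume
  pos : ∀ x, 0 < ω x
  h2 : ∀ c R, 0 < R → ∀ᵐ x ∂volume, x ∈ Metric.closedBall c R →
    (μ (Metric.closedBall c R)).toReal ≤ A * ω x * (volume (Metric.closedBall c R)).toReal
  h3 : ∀ (E : Set (Fin n → ℝ)) c R, 0 < R → volume (E ∩ Metric.closedBall c R) * μ (Metric.closedBall c R)
    ≤ ENNReal.ofReal A * μ (E ∩ Metric.closedBall c R) * volume (Metric.closedBall c R)
  h5 : ∀ c R, 0 < R → 4 * volume (Metric.closedBall c R ∩
      {x | 4 * (μ (Metric.closedBall c R)).toReal < ω x * (volume (Metric.closedBall c R)).toReal})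
      ≤ volume (Metric.closedBall c R)
  fin : ∀ c R, 0 < R → μ (Metric.closedBall c R) ≠ ⊤
  mpos : ∀ c R, 0 < R → μ (Metric.closedBall c R) ≠ 0
  cheb : ∀ c R, 0 < R → μ ({x | lam * ω x < |f x - cQ c R|} ∩ Metric.closedBall c R) ≤
    δ * μ (Metric.closedBall c R)

open Metric Set in
lemma vol_scale {n : ℕ} (x y : Fin n → ℝ) (s : ℕ) (R : ℝ) (hR : 0 < R) :
    volume (closedBall x (s * R)) = (s : ENNReal) ^ n * volume (closedBall y R) := by
  rw [Real.volume_pi_closedBall _ (by positivity), Real.volume_pi_closedBall _ hR.le,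
    Fintype.card_fin, show 2 * (s * R) = s * (2 * R) by ring, mul_pow,
    ENNReal.ofReal_mul (by positivity), ENNReal.ofReal_pow (by positivity), ENNReal.ofReal_natCast]

open Metric Set in
lemma Good.doubling {n : ℕ} {A lam : ℝ} {δ : ENNReal} {μ : Measure (Fin n → ℝ)}
    {ω f : (Fin n → ℝ) → ℝ} {cQ : (Fin n → ℝ) → ℝ → ℝ} (g : Good n A lam δ μ ω f cQ)
    (x : Fin n → ℝ) (s : ℕ) (hs : 1 ≤ s) (R : ℝ) (hR : 0 < R) :
    μ (closedBall x (s * R)) ≤ ENNReal.ofReal A * s ^ n * μ (closedBall x R) := by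
  have hs' : (1 : ℝ) ≤ s := by exact_mod_cast hs
  have h := g.h3 (closedBall x R) x (s * R) (by positivity)
  rw [inter_eq_left.2 (closedBall_subset_closedBall (by nlinarith)), vol_scale x x s R hR] at h
  have hpos : volume (closedBall x R) ≠ 0 := (measure_closedBall_pos _ _ hR).ne'
  have hfin : volume (closedBall x R) ≠ ⊤ := measure_closedBall_lt_top.ne
  rw [← ENNReal.mul_le_mul_iff_right hpos hfin]
  refine h.trans (le_of_eq ?_)
  ring

open Metric Set in
lemma Good.chebV {n : ℕ} {A lam : ℝ} {δ : ENNReal} {μ : Measure (Fin n → ℝ)}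
    {ω f : (Fin n → ℝ) → ℝ} {cQ : (Fin n → ℝ) → ℝ → ℝ} (g : Good n A lam δ μ ω f cQ)
    (c : Fin n → ℝ) (R : ℝ) (hR : 0 < R) :
    volume ({x | lam * ω x < |f x - cQ c R|} ∩ closedBall c R) ≤
      ENNReal.ofReal A * δ * volume (closedBall c R) := by
  have h := g.h3 {x | lam * ω x < |f x - cQ c R|} c R hR
  rw [← ENNReal.mul_le_mul_iff_left (g.mpos c R hR) (g.fin c R hR)]
  refine h.trans ?_
  calc _ ≤ ENNReal.ofReal A * (δ * μ (closedBall c R)) * volume (closedBall c R) := by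
        gcongr; exact g.cheb c R hR
    _ = _ := by ring

lemma Good.small {n : ℕ} {A lam : ℝ} {δ : ENNReal} {μ : Measure (Fin n → ℝ)}
    {ω f : (Fin n → ℝ) → ℝ} {cQ : (Fin n → ℝ) → ℝ → ℝ} (g : Good n A lam δ μ ω f cQ) :
    4 * (ENNReal.ofReal A * δ * 2 ^ n) ≤ 1 := by
  refine le_trans ?_ g.hδ
  have h1 : (1 : ENNReal) ≤ ENNReal.ofReal A := by simpa using g.hA
  calc 4 * (ENNReal.ofReal A * δ * 2 ^ n) = 4 * (ENNReal.ofReal A) ^ 1 * 2 ^ n * δ := by ring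
    _ ≤ _ := by
      gcongr <;> first | exact h1 | norm_num

lemma Good.small' {n : ℕ} {A lam : ℝ} {δ : ENNReal} {μ : Measure (Fin n → ℝ)}
    {ω f : (Fin n → ℝ) → ℝ} {cQ : (Fin n → ℝ) → ℝ → ℝ} (g : Good n A lam δ μ ω f cQ) :
    4 * (ENNReal.ofReal A * δ) ≤ 1 := by
  refine le_trans ?_ g.small
  have : (1 : ENNReal) ≤ 2 ^ n := one_le_pow₀ (by norm_num)
  calc 4 * (ENNReal.ofReal A * δ) = 4 * (ENNReal.ofReal A * δ * 1) := by ring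
    _ ≤ _ := by gcongr

open Metric Set in
lemma Good.compare {n : ℕ} {A lam : ℝ} {δ : ENNReal} {μ : Measure (Fin n → ℝ)}
    {ω f : (Fin n → ℝ) → ℝ} {cQ : (Fin n → ℝ) → ℝ → ℝ} (g : Good n A lam δ μ ω f cQ)
    (c : Fin n → ℝ) (R : ℝ) (hR : 0 < R) (c' : ℝ)
    (h : 4 * volume ({x | lam * ω x < |f x - c'|} ∩ closedBall c R) ≤ volume (closedBall c R)) :
    ∀ᵐ x ∂volume, x ∈ closedBall c R → |cQ c R - c'| ≤ 8 * A * lam * ω x := by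
  set B := closedBall c R with hB
  have hpos : 0 < volume B := (measure_closedBall_pos _ _ hR)
  have hfin : volume B ≠ ⊤ := measure_closedBall_lt_top.ne
  set S1 := {x | lam * ω x < |f x - c'|} ∩ B
  set S2 := {x | lam * ω x < |f x - cQ c R|} ∩ B
  set S3 := B ∩ {x | 4 * (μ B).toReal < ω x * (volume B).toReal}
  have hS2 : 4 * volume S2 ≤ volume B := by
    calc 4 * volume S2 ≤ 4 * (ENNReal.ofReal A * δ * volume B) := by
          gcongr; exact g.chebV c R hR
      _ = 4 * (ENNReal.ofReal A * δ) * volume B := by ring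
      _ ≤ 1 * volume B := by gcongr; exact g.small'
      _ = _ := one_mul _
  have hS3 : 4 * volume S3 ≤ volume B := g.h5 c R hR
  have hex : ∃ x ∈ B, x ∉ S1 ∪ S2 ∪ S3 := by
    by_contra hcon
    push Not at hcon
    have h1 : volume B ≤ volume S1 + volume S2 + volume S3 :=
      (measure_mono hcon).trans ((measure_union_le _ _).trans (by gcongr; exact measure_union_le _ _))
    have h2 : 4 * volume B ≤ 3 * volume B := by
      calc 4 * volume B ≤ 4 * (volume S1 + volume S2 + volume S3) := by gcongr
        _ = 4 * volume S1 + 4 * volume S2 + 4 * volume S3 := by ring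
        _ ≤ volume B + volume B + volume B := by gcongr
        _ = _ := by ring
    rw [ENNReal.mul_le_mul_iff_left hpos.ne' hfin] at h2
    norm_num at h2
  obtain ⟨x, hxB, hx⟩ := hex
  simp only [mem_union, not_or] at hx
  have e1 : |f x - c'| ≤ lam * ω x := not_lt.1 fun h => hx.1.1 ⟨h, hxB⟩
  have e2 : |f x - cQ c R| ≤ lam * ω x := not_lt.1 fun h => hx.1.2 ⟨h, hxB⟩
  have e3 : ω x * (volume B).toReal ≤ 4 * (μ B).toReal := not_lt.1 fun h => hx.2 ⟨hxB, h⟩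
  have e4 : |cQ c R - c'| ≤ 2 * lam * ω x := by
    rw [abs_le] at *
    constructor <;> linarith [e1.1, e1.2, e2.1, e2.2]
  have hV : 0 < (volume B).toReal := ENNReal.toReal_pos hpos.ne' hfin
  filter_upwards [g.h2 c R hR] with y hy hyB
  have e5 := hy hyB
  have e6 : ω x ≤ 4 * A * ω y := by
    refine le_of_mul_le_mul_right ?_ hV
    calc ω x * (volume B).toReal ≤ 4 * (μ B).toReal := e3
      _ ≤ 4 * (A * ω y * (volume B).toReal) := by gcongr
      _ = _ := by ring
  calc _ ≤ 2 * lam * ω x := e4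
    _ ≤ 2 * lam * (4 * A * ω y) := by have := g.hlam; gcongr
    _ = _ := by ring

open Metric Set in
lemma Good.step {n : ℕ} {A lam : ℝ} {δ : ENNReal} {μ : Measure (Fin n → ℝ)}
    {ω f : (Fin n → ℝ) → ℝ} {cQ : (Fin n → ℝ) → ℝ → ℝ} (g : Good n A lam δ μ ω f cQ)
    (T : ℝ) (hT : 0 ≤ T) (q : ENNReal)
    (ih : ∀ (c : Fin n → ℝ) (R : ℝ), 0 < R → μ ({x | T * ω x < |f x - cQ c R|} ∩ closedBall c R) ≤
      q * μ (closedBall c R))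
    (c : Fin n → ℝ) (R : ℝ) (hR : 0 < R) :
    2 * μ ({x | (T + 16 * A * lam) * ω x < |f x - cQ c R|} ∩ closedBall c R) ≤
      q * μ (closedBall c R) := by
  have hA := g.hA
  have hl := g.hlam
  set c' := cQ c (2 * R) with hc'
  set E := {x | lam * ω x < |f x - c'|} ∩ closedBall c (2 * R) with hEdef
  have hV2 : ∀ x : Fin n → ℝ, volume (closedBall c (2 * R)) = 2 ^ n * volume (closedBall x R) := by
    intro x
    have := vol_scale c x 2 R hR
    exact_mod_cast this
  have hEV : ∀ x : Fin n → ℝ, 4 * volume E ≤ volume (closedBall x R) := by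
    intro x
    calc 4 * volume E ≤ 4 * (ENNReal.ofReal A * δ * volume (closedBall c (2 * R))) := by
          gcongr; exact g.chebV c (2 * R) (by positivity)
      _ = 4 * (ENNReal.ofReal A * δ * 2 ^ n) * volume (closedBall x R) := by rw [hV2 x]; ring
      _ ≤ 1 * volume (closedBall x R) := by gcongr; exact g.small
      _ = _ := one_mul _
  have hsub : ∀ x ∈ closedBall c R, closedBall x R ⊆ closedBall c (2 * R) := by
    intro x hx
    apply closedBall_subset_closedBall'
    rw [mem_closedBall] at hx
    linarith
  -- compare with the doubled cube
  have cmp1 := g.compare c R hR c' (by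
    refine le_trans ?_ (hEV c)
    gcongr
    exact fun x hx => ⟨hx.1, hsub c (mem_closedBall_self hR.le) hx.2⟩)
  set F := {x | lam * ω x < |f x - c'|} with hF
  obtain ⟨u, ρ, huc, hu, hud, hnull⟩ := cz_cover E c R hR (by
    intro x hx
    refine le_trans ?_ (hEV x)
    gcongr
    exact inter_subset_left)
  have cmp2 : ∀ b ∈ u, ∀ᵐ x ∂volume, x ∈ closedBall b (6 * ρ b) →
      |cQ b (6 * ρ b) - c'| ≤ 8 * A * lam * ω x := by
    intro b hb
    obtain ⟨hρ0, hbc, hρR, h4, -⟩ := hu b hb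
    refine g.compare b (6 * ρ b) (by positivity) c' (le_trans ?_ h4)
    refine mul_le_mul_right (measure_mono ?_) _
    intro x hx
    exact ⟨⟨hx.1, hsub b hbc (closedBall_subset_closedBall hρR hx.2)⟩, hx.2⟩
  have cmp2' := (ae_ball_iff huc).2 cmp2
  have hnull' : ∀ᵐ x ∂volume, x ∉ (E ∩ closedBall c R) \ ⋃ b ∈ u, closedBall b (6 * ρ b) :=
    measure_eq_zero_iff_ae_notMem.1 hnull
  have hae : ∀ᵐ x ∂μ, x ∈ {x | (T + 16 * A * lam) * ω x < |f x - cQ c R|} ∩ closedBall c R →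
      x ∈ ⋃ b ∈ u, {x | T * ω x < |f x - cQ b (6 * ρ b)|} ∩ closedBall b (6 * ρ b) := by
    apply g.ac.ae_le
    filter_upwards [cmp1, cmp2', hnull'] with x h1 h2 h3 hx
    have hx1 : (T + 16 * A * lam) * ω x < |f x - cQ c R| := hx.1
    have hw := g.pos x
    have hcm := h1 hx.2
    have habs : |f x - cQ c R| ≤ |f x - c'| + |cQ c R - c'| := by
      rw [abs_sub_comm (cQ c R) c']
      exact abs_sub_le _ _ _
    have hAlw : lam * ω x ≤ A * lam * ω x := by
      rw [mul_assoc]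
      exact le_mul_of_one_le_left (by positivity) hA
    have hTw : 0 ≤ T * ω x := by positivity
    have hlw : 0 < lam * ω x := by positivity
    have hxE : x ∈ E ∩ closedBall c R := by
      refine ⟨⟨?_, closedBall_subset_closedBall (by linarith) hx.2⟩, hx.2⟩
      show lam * ω x < |f x - c'|
      nlinarith
    have hxU : x ∈ ⋃ b ∈ u, closedBall b (6 * ρ b) := by
      by_contra hh
      exact h3 ⟨hxE, hh⟩
    simp only [mem_iUnion] at hxU ⊢
    obtain ⟨b, hb, hxb⟩ := hxU
    refine ⟨b, hb, ?_, hxb⟩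
    have hcm2 := h2 b hb hxb
    have habs2 : |f x - c'| ≤ |f x - cQ b (6 * ρ b)| + |cQ b (6 * ρ b) - c'| := abs_sub_le _ _ _
    show T * ω x < _
    nlinarith
  have hsum : ∑' b : u, μ (closedBall (b : Fin n → ℝ) (ρ b)) ≤
      4 * ENNReal.ofReal A * μ E := by
    have hb1 : ∀ b : u, μ (closedBall (b : Fin n → ℝ) (ρ b)) ≤
        4 * ENNReal.ofReal A * μ.restrict E (closedBall (b : Fin n → ℝ) (ρ b)) := by
      intro b
      obtain ⟨hρ0, hbc, hρR, -, h4⟩ := hu b b.2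
      have h3 := g.h3 E b (ρ b) hρ0
      have hpos : volume (closedBall (b : Fin n → ℝ) (ρ b)) ≠ 0 :=
        (measure_closedBall_pos _ _ hρ0).ne'
      have hfin : volume (closedBall (b : Fin n → ℝ) (ρ b)) ≠ ⊤ := measure_closedBall_lt_top.ne
      rw [Measure.restrict_apply measurableSet_closedBall, inter_comm _ E]
      rw [← ENNReal.mul_le_mul_iff_right hpos hfin]
      calc _ ≤ 4 * volume (E ∩ closedBall (b : Fin n → ℝ) (ρ b)) *
              μ (closedBall (b : Fin n → ℝ) (ρ b)) := by gcongr
        _ = 4 * (volume (E ∩ closedBall (b : Fin n → ℝ) (ρ b)) *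
              μ (closedBall (b : Fin n → ℝ) (ρ b))) := by ring
        _ ≤ 4 * (ENNReal.ofReal A * μ (E ∩ closedBall (b : Fin n → ℝ) (ρ b)) *
              volume (closedBall (b : Fin n → ℝ) (ρ b))) := by gcongr
        _ = _ := by ring
    calc _ ≤ ∑' b : u, 4 * ENNReal.ofReal A *
            μ.restrict E (closedBall (b : Fin n → ℝ) (ρ b)) := ENNReal.tsum_le_tsum hb1
      _ = 4 * ENNReal.ofReal A * μ.restrict E (⋃ b ∈ u, closedBall b (ρ b)) := by
          rw [ENNReal.tsum_mul_left, measure_biUnion huc hud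
            (fun _ _ => measurableSet_closedBall)]
      _ ≤ 4 * ENNReal.ofReal A * μ E := by
          refine mul_le_mul_right ?_ _
          exact (measure_mono (subset_univ _)).trans (Measure.restrict_apply_univ E).le
  have hmain : μ ({x | (T + 16 * A * lam) * ω x < |f x - cQ c R|} ∩ closedBall c R) ≤
      q * (ENNReal.ofReal A * 6 ^ n * (4 * ENNReal.ofReal A * μ E)) := by
    calc _ ≤ μ (⋃ b ∈ u, {x | T * ω x < |f x - cQ b (6 * ρ b)|} ∩ closedBall b (6 * ρ b)) :=
          measure_mono_ae hae
      _ ≤ ∑' b : u, μ ({x | T * ω x < |f x - cQ b (6 * ρ b)|} ∩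
            closedBall (b : Fin n → ℝ) (6 * ρ b)) := measure_biUnion_le μ huc _
      _ ≤ ∑' b : u, q * (ENNReal.ofReal A * 6 ^ n * μ (closedBall (b : Fin n → ℝ) (ρ b))) := by
          refine ENNReal.tsum_le_tsum fun b => ?_
          have hρ0 := (hu b b.2).1
          refine (ih b (6 * ρ b) (by positivity)).trans ?_
          gcongr
          have := g.doubling b 6 (by norm_num) (ρ b) hρ0
          exact_mod_cast this
      _ = q * (ENNReal.ofReal A * 6 ^ n * ∑' b : u, μ (closedBall (b : Fin n → ℝ) (ρ b))) := by
          rw [ENNReal.tsum_mul_left, ENNReal.tsum_mul_left]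
      _ ≤ _ := by gcongr
  have hEμ : μ E ≤ δ * (ENNReal.ofReal A * 2 ^ n * μ (closedBall c R)) := by
    refine (g.cheb c (2 * R) (by positivity)).trans ?_
    gcongr
    have := g.doubling c 2 (by norm_num) R hR
    exact_mod_cast this
  calc _ ≤ 2 * (q * (ENNReal.ofReal A * 6 ^ n * (4 * ENNReal.ofReal A *
          (δ * (ENNReal.ofReal A * 2 ^ n * μ (closedBall c R)))))) := by
        gcongr
        exact hmain.trans (by gcongr)
    _ = q * (8 * ENNReal.ofReal A ^ 3 * 12 ^ n * δ * μ (closedBall c R)) := by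
        rw [show (12 : ENNReal) = 6 * 2 by norm_num, mul_pow]
        ring
    _ ≤ q * (1 * μ (closedBall c R)) := by gcongr; exact g.hδ
    _ = _ := by rw [one_mul]

open Metric Set in
lemma Good.iter {n : ℕ} {A lam : ℝ} {δ : ENNReal} {μ : Measure (Fin n → ℝ)}
    {ω f : (Fin n → ℝ) → ℝ} {cQ : (Fin n → ℝ) → ℝ → ℝ} (g : Good n A lam δ μ ω f cQ) (k : ℕ) :
    ∀ (c : Fin n → ℝ) (R : ℝ), 0 < R →
      μ ({x | (k * (16 * A * lam)) * ω x < |f x - cQ c R|} ∩ closedBall c R) ≤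
      (2⁻¹) ^ k * μ (closedBall c R) := by
  have hA := g.hA
  have hl := g.hlam
  induction k with
  | zero =>
    intro c R hR
    simp only [pow_zero, one_mul]
    exact measure_mono inter_subset_right
  | succ k ih =>
    intro c R hR
    have h := g.step (k * (16 * A * lam)) (by positivity) _ ih c R hR
    rw [show ((k : ℝ) * (16 * A * lam) + 16 * A * lam) = ((k + 1 : ℕ) : ℝ) * (16 * A * lam) by
      push_cast; ring] at h
    have key : ∀ m : ENNReal, m = 2⁻¹ * (2 * m) := fun m => by
      rw [← mul_assoc, ENNReal.inv_mul_cancel (by norm_num) (by norm_num), one_mul]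
    calc _ = 2⁻¹ * (2 * μ ({x | ((k + 1 : ℕ) * (16 * A * lam)) * ω x < |f x - cQ c R|} ∩
              closedBall c R)) := key _
      _ ≤ 2⁻¹ * (2⁻¹ ^ k * μ (closedBall c R)) := by gcongr
      _ = _ := by ring

lemma osc_bound {a b r : ℝ} (ha : 0 ≤ a) (hb : 0 < b) (hr0 : 0 < r) (hr1 : r < 1) :
    (a / b) ^ r * b ≤ a + b := by
  by_cases h : a ≤ b
  · have : (a / b) ^ r ≤ 1 := Real.rpow_le_one (by positivity) ((div_le_one hb).2 h) hr0.le
    nlinarith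
  · have h1 : 1 ≤ a / b := (one_le_div hb).2 (not_le.1 h).le
    have : (a / b) ^ r ≤ a / b := by
      simpa using Real.rpow_le_rpow_of_exponent_le h1 hr1.le
    calc (a / b) ^ r * b ≤ a / b * b := by gcongr
      _ = a := by field_simp
      _ ≤ _ := by linarith

open Metric Set in
lemma mk_good {n : ℕ} {r A : ℝ} (hr0 : 0 < r) (hr1 : r < 1) (hA : 1 ≤ A)
    {ω f : (Fin n → ℝ) → ℝ} {cQ : (Fin n → ℝ) → ℝ → ℝ} (hpos : ∀ x, 0 < ω x)
    (hω : ∀ c R, IntegrableOn ω (closedBall c R) volume)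
    (hf : ∀ c R, IntegrableOn f (closedBall c R) volume)
    (hA1 : ∀ c R, 0 < R → ∀ᵐ x ∂(volume : Measure (Fin n → ℝ)), x ∈ closedBall c R →
      (∫ x in closedBall c R, ω x) / (2 * R) ^ n ≤ A * ω x)
    (hosc : ∀ c R, 0 < R → (∫ x in closedBall c R, (|f x - cQ c R| / ω x) ^ r * ω x) ≤
      ∫ x in closedBall c R, ω x) :
    Good n A ((8 * A ^ 3 * 12 ^ n) ^ (1 / r)) (ENNReal.ofReal ((8 * A ^ 3 * 12 ^ n)⁻¹))
      (volume.withDensity (fun x => ENNReal.ofReal (ω x))) ω f cQ := by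
  set M : ℝ := 8 * A ^ 3 * 12 ^ n with hM
  have hMpos : 0 < M := by positivity
  set μ := (volume : Measure (Fin n → ℝ)).withDensity (fun x => ENNReal.ofReal (ω x)) with hμ
  have happ : ∀ S, μ S = ∫⁻ x in S, ENNReal.ofReal (ω x) := fun S => withDensity_apply' _ S
  have hball : ∀ c R, μ (closedBall c R) = ENNReal.ofReal (∫ x in closedBall c R, ω x) := by
    intro c R
    rw [happ, ofReal_integral_eq_lintegral_ofReal (hω c R)
      (Filter.Eventually.of_forall fun x => (hpos x).le)]
  have hint0 : ∀ c R, 0 ≤ ∫ x in closedBall c R, ω x := fun c R =>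
    integral_nonneg fun x => (hpos x).le
  have hballR : ∀ c R, (μ (closedBall c R)).toReal = ∫ x in closedBall c R, ω x := by
    intro c R
    rw [hball, ENNReal.toReal_ofReal (hint0 c R)]
  have hvR : ∀ (c : Fin n → ℝ) R, 0 < R →
      (volume (closedBall c R)).toReal = (2 * R) ^ n := by
    intro c R hR
    rw [Real.volume_pi_closedBall _ hR.le, Fintype.card_fin, ENNReal.toReal_ofReal (by positivity)]
  have hfin : ∀ c R, μ (closedBall c R) ≠ ⊤ := by
    intro c R; rw [hball]; exact ENNReal.ofReal_ne_top
  have h2 : ∀ c R, 0 < R → ∀ᵐ x ∂volume, x ∈ closedBall c R →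
      (μ (closedBall c R)).toReal ≤ A * ω x * (volume (closedBall c R)).toReal := by
    intro c R hR
    filter_upwards [hA1 c R hR] with x hx hxB
    rw [hballR, hvR c R hR]
    have := hx hxB
    rwa [div_le_iff₀ (by positivity)] at this
  have hA0 : 0 ≤ A := by linarith
  refine ⟨hA, by positivity, ?_, withDensity_absolutelyContinuous _ _, hpos, h2, ?_, ?_,
    fun c R _ => hfin c R, ?_, ?_⟩
  · have : 8 * ENNReal.ofReal A ^ 3 * 12 ^ n = ENNReal.ofReal M := by
      rw [hM, ENNReal.ofReal_mul (by positivity), ENNReal.ofReal_mul (by positivity),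
        ENNReal.ofReal_pow hA0, ENNReal.ofReal_pow (by norm_num)]
      norm_num
    rw [this, ← ENNReal.ofReal_mul hMpos.le, mul_inv_cancel₀ hMpos.ne', ENNReal.ofReal_one]
  · intro E c R hR
    have hvfin : volume (closedBall c R) ≠ ⊤ := measure_closedBall_lt_top.ne
    have h2' : ∀ᵐ x ∂(volume.restrict (E ∩ closedBall c R)),
        μ (closedBall c R) ≤
          ENNReal.ofReal (ω x) * (ENNReal.ofReal A * volume (closedBall c R)) := by
      have h2a : ∀ᵐ x ∂(volume.restrict (closedBall c R)),
          μ (closedBall c R) ≤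
          ENNReal.ofReal (ω x) * (ENNReal.ofReal A * volume (closedBall c R)) := by
        rw [ae_restrict_iff' measurableSet_closedBall]
        filter_upwards [h2 c R hR] with x hx hxB
        rw [← ENNReal.ofReal_toReal (hfin c R)]
        refine (ENNReal.ofReal_le_ofReal (hx hxB)).trans (le_of_eq ?_)
        rw [ENNReal.ofReal_mul (by have := hpos x; positivity), ENNReal.ofReal_mul hA0,
          ENNReal.ofReal_toReal hvfin]
        ring
      exact ae_restrict_of_ae_restrict_of_subset inter_subset_right h2a
    calc _ = ∫⁻ x in E ∩ closedBall c R, μ (closedBall c R) := by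
          rw [setLIntegral_const, mul_comm]
      _ ≤ ∫⁻ x in E ∩ closedBall c R,
          ENNReal.ofReal (ω x) * (ENNReal.ofReal A * volume (closedBall c R)) :=
          lintegral_mono_ae h2'
      _ = _ := by
          rw [lintegral_mul_const' _ _ (ENNReal.mul_ne_top ENNReal.ofReal_ne_top hvfin), ← happ]
          ring
  · intro c R hR
    have hvfin : volume (closedBall c R) ≠ ⊤ := measure_closedBall_lt_top.ne
    have hmeas : AEMeasurable (fun x => ENNReal.ofReal (ω x))
        (volume.restrict (closedBall c R)) := (hω c R).aemeasurable.ennreal_ofReal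
    set ε : ENNReal := ENNReal.ofReal (4 * (μ (closedBall c R)).toReal /
      (volume (closedBall c R)).toReal) with hε
    have hv0 : 0 < (volume (closedBall c R)).toReal := by rw [hvR c R hR]; positivity
    have h := mul_meas_ge_le_lintegral₀ hmeas ε
    rw [← happ] at h
    have hsub : volume (closedBall c R ∩ {x | 4 * (μ (closedBall c R)).toReal <
        ω x * (volume (closedBall c R)).toReal}) ≤
        volume.restrict (closedBall c R) {x | ε ≤ ENNReal.ofReal (ω x)} := by
      refine le_trans (measure_mono ?_) (Measure.le_restrict_apply _ _)
      rintro x ⟨hxB, hx⟩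
      refine ⟨?_, hxB⟩
      apply ENNReal.ofReal_le_ofReal
      rw [div_le_iff₀ hv0]
      exact le_of_lt hx
    have hμ0 : μ (closedBall c R) ≠ 0 := by
      rw [happ, Ne, lintegral_eq_zero_iff' hmeas]
      intro h0
      have : ∀ᵐ x ∂(volume.restrict (closedBall c R)), False := by
        filter_upwards [h0] with x hx
        simp at hx
        exact absurd (hpos x) (not_lt.2 hx)
      rw [Filter.eventually_false_iff_eq_bot, ae_eq_bot, Measure.restrict_eq_zero] at this
      exact (measure_closedBall_pos _ _ hR).ne' this
    have hεv : ε * volume (closedBall c R) = 4 * μ (closedBall c R) := by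
      rw [hε]
      nth_rewrite 2 [← ENNReal.ofReal_toReal hvfin]
      rw [← ENNReal.ofReal_mul (by positivity), div_mul_cancel₀ _ hv0.ne',
        ENNReal.ofReal_mul (by norm_num), ENNReal.ofReal_toReal (hfin c R)]
      norm_num
    rw [← ENNReal.mul_le_mul_iff_right hμ0 (hfin c R)]
    calc _ = (4 * μ (closedBall c R)) * volume (closedBall c R ∩
            {x | 4 * (μ (closedBall c R)).toReal <
              ω x * (volume (closedBall c R)).toReal}) := by ring
      _ ≤ (ε * volume (closedBall c R)) *
          volume.restrict (closedBall c R) {x | ε ≤ ENNReal.ofReal (ω x)} := by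
          rw [hεv]; gcongr
      _ = volume (closedBall c R) *
          (ε * volume.restrict (closedBall c R) {x | ε ≤ ENNReal.ofReal (ω x)}) := by ring
      _ ≤ volume (closedBall c R) * μ (closedBall c R) := by gcongr
      _ = _ := mul_comm _ _
  · intro c R hR
    rw [happ, Ne, lintegral_eq_zero_iff' (hω c R).aemeasurable.ennreal_ofReal]
    intro h0
    have : ∀ᵐ x ∂(volume.restrict (closedBall c R)), False := by
      filter_upwards [h0] with x hx
      simp at hx
      exact absurd (hpos x) (not_lt.2 hx)
    rw [Filter.eventually_false_iff_eq_bot, ae_eq_bot, Measure.restrict_eq_zero] at this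
    exact (measure_closedBall_pos _ _ hR).ne' this
  · intro c R hR
    set k := cQ c R with hk
    have hbd : IntegrableOn (fun x => |f x - k| + ω x) (closedBall c R) volume := by
      refine Integrable.add ?_ (hω c R)
      exact ((hf c R).sub (integrableOn_const measure_closedBall_lt_top.ne)).abs
    have hoi : IntegrableOn (fun x => (|f x - k| / ω x) ^ r * ω x) (closedBall c R) volume := by
      refine Integrable.mono' hbd ?_ (Filter.Eventually.of_forall fun x => ?_)
      · have h1 := (hf c R).aemeasurable
        have h2 := (hω c R).aemeasurable
        have h3 : AEMeasurable (fun x => |f x - k|) (volume.restrict (closedBall c R)) :=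
          (h1.sub_const k).abs
        exact (((h3.div h2).pow_const r).mul h2).aestronglyMeasurable
      · have := hpos x
        rw [Real.norm_of_nonneg (by positivity)]
        exact osc_bound (abs_nonneg _) this hr0 hr1
    have hle : ∫⁻ x in closedBall c R, ENNReal.ofReal ((|f x - k| / ω x) ^ r * ω x) ≤
        μ (closedBall c R) := by
      rw [← ofReal_integral_eq_lintegral_ofReal hoi
        (Filter.Eventually.of_forall fun x => by have := hpos x; simp only [Pi.zero_apply]; positivity), hball]
      exact ENNReal.ofReal_le_ofReal (hosc c R hR)
    set S := {x | M ^ (1 / r) * ω x < |f x - k|} ∩ closedBall c R with hS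
    have hnm : NullMeasurableSet S (volume : Measure (Fin n → ℝ)) := by
      have h1 := (hf c R).aemeasurable
      have h2 := (hω c R).aemeasurable
      have h3 : NullMeasurableSet {x | M ^ (1 / r) * ω x < |f x - k|}
          (volume.restrict (closedBall c R)) :=
        nullMeasurableSet_lt (h2.const_mul _) (h1.sub_const k).abs
      exact (nullMeasurableSet_restrict measurableSet_closedBall.nullMeasurableSet).1 h3
    have hlow : ENNReal.ofReal M * μ S ≤ μ (closedBall c R) := by
      refine le_trans ?_ hle
      calc ENNReal.ofReal M * μ S
          = ∫⁻ x in S, ENNReal.ofReal M * ENNReal.ofReal (ω x) := by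
            rw [lintegral_const_mul' _ _ ENNReal.ofReal_ne_top, happ]
        _ ≤ ∫⁻ x in S, ENNReal.ofReal ((|f x - k| / ω x) ^ r * ω x) := by
            refine lintegral_mono_ae ?_
            filter_upwards [ae_restrict_mem₀ hnm] with x hx
            rw [← ENNReal.ofReal_mul hMpos.le]
            apply ENNReal.ofReal_le_ofReal
            have hw := hpos x
            gcongr
            have h1 : M ^ (1 / r) ≤ |f x - k| / ω x := by
              rw [le_div_iff₀ hw]; exact le_of_lt hx.1
            calc M = (M ^ (1 / r)) ^ r := by
                  rw [← Real.rpow_mul hMpos.le, one_div, inv_mul_cancel₀ hr0.ne', Real.rpow_one]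
              _ ≤ _ := Real.rpow_le_rpow (by positivity) h1 hr0.le
        _ ≤ _ := lintegral_mono_set inter_subset_right
    calc μ S = ENNReal.ofReal M⁻¹ * (ENNReal.ofReal M * μ S) := by
          rw [← mul_assoc, ← ENNReal.ofReal_mul (by positivity), inv_mul_cancel₀ hMpos.ne',
            ENNReal.ofReal_one, one_mul]
      _ ≤ _ := by gcongr

open Metric Set in
lemma pi_core {n : ℕ} {r A : ℝ} (hr0 : 0 < r) (hr1 : r < 1) (hA : 1 ≤ A)
    {ω f : (Fin n → ℝ) → ℝ} {cQ : (Fin n → ℝ) → ℝ → ℝ} (hpos : ∀ x, 0 < ω x)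
    (hω : ∀ c R, IntegrableOn ω (closedBall c R) volume)
    (hf : ∀ c R, IntegrableOn f (closedBall c R) volume)
    (hA1 : ∀ c R, 0 < R → ∀ᵐ x ∂(volume : Measure (Fin n → ℝ)), x ∈ closedBall c R →
      (∫ x in closedBall c R, ω x) / (2 * R) ^ n ≤ A * ω x)
    (hosc : ∀ c R, 0 < R → (∫ x in closedBall c R, (|f x - cQ c R| / ω x) ^ r * ω x) ≤
      ∫ x in closedBall c R, ω x)
    (c : Fin n → ℝ) (R : ℝ) (hR : 0 < R) (t : ℝ) (ht : 0 < t) :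
    (∫ x in {x | t * ω x < |f x - cQ c R|} ∩ closedBall c R, ω x) ≤
      2 * Real.exp (-(Real.log 2 / (16 * A * (8 * A ^ 3 * 12 ^ n) ^ (1 / r))) * t) *
        ∫ x in closedBall c R, ω x := by
  have g := mk_good hr0 hr1 hA hpos hω hf hA1 hosc
  set lam := (8 * A ^ 3 * 12 ^ n) ^ (1 / r)
  set μ := (volume : Measure (Fin n → ℝ)).withDensity (fun x => ENNReal.ofReal (ω x)) with hμ
  have hl := g.hlam
  set K := 16 * A * lam with hK
  have hKpos : 0 < K := by positivity
  have happ : ∀ S ⊆ closedBall c R, (μ S).toReal = ∫ x in S, ω x := by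
    intro S hS
    rw [hμ, withDensity_apply' _ S, integral_eq_lintegral_of_nonneg_ae
      (Filter.Eventually.of_forall fun x => (hpos x).le)
      ((hω c R).mono_set hS).aestronglyMeasurable]
  set k := ⌊t / K⌋₊ with hk
  have hkt : k * K ≤ t := by
    rw [← le_div_iff₀ hKpos]; exact Nat.floor_le (by positivity)
  have htk : t / K < k + 1 := Nat.lt_floor_add_one _
  have h1 := g.iter k c R hR
  have h2 : μ ({x | t * ω x < |f x - cQ c R|} ∩ closedBall c R) ≤
      2⁻¹ ^ k * μ (closedBall c R) := by
    refine le_trans (measure_mono ?_) h1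
    rintro x ⟨hx, hxB⟩
    have hw := hpos x
    have hx' : t * ω x < |f x - cQ c R| := hx
    have hx2 : k * K * ω x ≤ t * ω x := by gcongr
    exact ⟨hx2.trans_lt hx', hxB⟩
  have h3 := ENNReal.toReal_mono (ENNReal.mul_ne_top (by simp) (g.fin c R hR)) h2
  rw [happ _ inter_subset_right, ENNReal.toReal_mul, happ _ subset_rfl] at h3
  refine h3.trans ?_
  have hint0 : 0 ≤ ∫ x in closedBall c R, ω x := integral_nonneg fun x => (hpos x).le
  gcongr
  rw [ENNReal.toReal_pow, ENNReal.toReal_inv, ENNReal.toReal_ofNat]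
  have e1 : (2⁻¹ : ℝ) ^ k = Real.exp (-(Real.log 2 * k)) := by
    rw [Real.exp_neg, Real.exp_mul, Real.exp_log (by norm_num), Real.rpow_natCast, inv_pow]
  have e2 : (2 : ℝ) = Real.exp (Real.log 2) := (Real.exp_log (by norm_num)).symm
  rw [e1]
  nth_rewrite 2 [e2]
  rw [← Real.exp_add]
  apply Real.exp_le_exp.2
  have hlog : 0 < Real.log 2 := Real.log_pos (by norm_num)
  have : Real.log 2 * (t / K) ≤ Real.log 2 * (k + 1) := by gcongr
  rw [show -(Real.log 2 / K) * t = -(Real.log 2 * (t / K)) by ring]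
  linarith

/-- weighted John–Nirenberg type exponential decay for the `r`-oscillation,
`0 < r < 1`, `ω ∈ A₁`, for `f` with `‖f‖_{BMO_r(ω)} = 1` (expressed at the minimizers `c_Q`). -/
theorem stmt1 (n : ℕ) (r A : ℝ) (hr0 : 0 < r) (hr1 : r < 1) (hA : 1 ≤ A) :
    ∃ c₁ c₂ : ℝ, 0 < c₁ ∧ 0 < c₂ ∧
      ∀ (ω f : Rn n → ℝ), IsA1 ω A → LocallyIntegrable f volume →
        ∀ cQ : Rn n → ℝ → ℝ,
        -- `cQ c ρ` minimizes `k ↦ ∫_Q (|f-k|/ω)^r dμ` over the cube `Q = cube c ρ`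
        (∀ (c : Rn n) (ρ : ℝ), 0 < ρ → ∀ k : ℝ,
            (∫ x in cube c ρ, (|f x - cQ c ρ| / ω x) ^ r * ω x) ≤
              ∫ x in cube c ρ, (|f x - k| / ω x) ^ r * ω x) →
        -- `‖f‖_{BMO_r(ω)} = 1`: every cube oscillation is `≤ 1` ...
        (∀ (c : Rn n) (ρ : ℝ), 0 < ρ →
            (∫ x in cube c ρ, (|f x - cQ c ρ| / ω x) ^ r * ω x) ≤ wMeas ω (cube c ρ)) →
        -- ... and the supremum over cubes is attained at value `1`
        (∀ ε : ℝ, 0 < ε → ∃ (c : Rn n) (ρ : ℝ), 0 < ρ ∧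
            (1 - ε) * wMeas ω (cube c ρ) ≤
              ∫ x in cube c ρ, (|f x - cQ c ρ| / ω x) ^ r * ω x) →
        ∀ (c : Rn n) (ρ : ℝ), 0 < ρ → ∀ t : ℝ, 0 < t →
          wMeas ω {x ∈ cube c ρ | t * ω x < |f x - cQ c ρ|} ≤
            c₁ * Real.exp (-c₂ * t) * wMeas ω (cube c ρ) := by
  refine ⟨2, Real.log 2 / (16 * A * (8 * A ^ 3 * 12 ^ n) ^ (1 / r)), by norm_num,
    div_pos (Real.log_pos (by norm_num)) (by positivity), ?_⟩
  rintro ω f ⟨hpos, hωi, -, hA1⟩ hfi cQ - hosc - c ρ hρ t ht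
  have hmp := PiLp.volume_preserving_toLp (Fin n)
  have hemb : MeasurableEmbedding (WithLp.toLp 2 : (Fin n → ℝ) → Rn n) :=
    (MeasurableEquiv.toLp 2 (Fin n → ℝ)).measurableEmbedding
  have hpre : ∀ (c : Fin n → ℝ) (R : ℝ), 0 ≤ R →
      (WithLp.toLp 2 : (Fin n → ℝ) → Rn n) ⁻¹' (cube (WithLp.toLp 2 c) (2 * R)) =
        Metric.closedBall c R := by
    intro c R hR
    ext x
    simp only [cube, Set.mem_preimage, Set.mem_ofPred_eq, Metric.mem_closedBall,
      dist_pi_le_iff hR, Real.dist_eq]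
    constructor <;> intro h i <;> have := h i <;> linarith
  have hcont : Continuous (WithLp.toLp 2 : (Fin n → ℝ) → Rn n) :=
    PiLp.continuous_toLp 2 _
  have hint : ∀ (g : Rn n → ℝ), LocallyIntegrable g volume → ∀ (c : Fin n → ℝ) (R : ℝ),
      IntegrableOn (fun x => g (WithLp.toLp 2 x)) (Metric.closedBall c R) volume := by
    intro g hg c R
    have h1 := hg.integrableOn_isCompact ((isCompact_closedBall c R).image hcont)
    have h2 := (hmp.integrableOn_comp_preimage hemb).2 h1
    rwa [Set.preimage_image_eq _ hemb.injective] at h2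
  have hset : ∀ (g : Rn n → ℝ) (S : Set (Rn n)),
      ∫ x in S, g x = ∫ x in (WithLp.toLp 2 : (Fin n → ℝ) → Rn n) ⁻¹' S, g (WithLp.toLp 2 x) :=
    fun g S => (hmp.setIntegral_preimage_emb hemb g S).symm
  have key := pi_core (n := n) (r := r) (A := A) (ω := fun x => ω (WithLp.toLp 2 x))
    (f := fun x => f (WithLp.toLp 2 x)) (cQ := fun c R => cQ (WithLp.toLp 2 c) (2 * R))
    hr0 hr1 hA (fun x => hpos _) (hint ω hωi) (hint f hfi)
    (by
      intro c R hR
      have h := hmp.quasiMeasurePreserving.ae (hA1 (WithLp.toLp 2 c) (2 * R) (by positivity))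
      filter_upwards [h] with x hx hxB
      rw [← hpre c R hR.le] at hxB
      have := hx hxB
      rw [wMeas, hset, hpre c R hR.le] at this
      exact this)
    (by
      intro c R hR
      have h := hosc (WithLp.toLp 2 c) (2 * R) (by positivity)
      rw [wMeas, hset, hset ω, hpre c R hR.le] at h
      exact h)
    (WithLp.ofLp c) (ρ / 2) (by positivity) t ht
  have h2 : 2 * (ρ / 2) = ρ := by ring
  have hp := hpre (WithLp.ofLp c) (ρ / 2) (by positivity)
  rw [h2, WithLp.toLp_ofLp] at hp
  simp only [h2, WithLp.toLp_ofLp] at key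
  rw [wMeas, wMeas, hset, hset ω (cube c ρ), hp]
  convert key using 3
  rw [← hp]
  ext x
  exact and_comm
end
end

section
/- Let $\omega \in A_1$ and $0 < r < 1$. Define $\|f\|_{BMO^r(\omega)} = \sup_Q \left(\frac{1}{\omega(Q)}\int_Q |f(x)-f_Q|^r\,\omega(x)^{1-r}\,dx\right)^{1/r}$ and $\|f\|_{BMO_r(\omega)} = \sup_Q \inf_c \left(\frac{1}{\omega(Q)}\int_Q \left(\frac{|f(x)-c|}{\omega(x)}\right)^r \omega(x)\,dx\right)^{1/r}$. Then these two quantities are equivalent: there is a constant $C \geq 1$ depending only on $n$, $r$, $[\omega]_{A_1}$ such that $\|f\|_{BMO_r(\omega)} \leq \|f\|_{BMO^r(\omega)} \leq C\,\|f\|_{BMO_r(\omega)}$ for all locally integrable $f$. -/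
open MeasureTheory Real
noncomputable section

section Helpers
open scoped ENNReal
open Filter

def pidx {n : ℕ} (c : Fin n → ℝ) (s : ℝ) (m : ℕ) (x : Fin n → ℝ) : Fin n → ℤ :=
  fun i => ⌊(x i - (c i - s)) / (2 * s) * 2 ^ m⌋

def cell {n : ℕ} (c : Fin n → ℝ) (s : ℝ) (m : ℕ) (k : Fin n → ℤ) : Set (Fin n → ℝ) :=
  {x | pidx c s m x = k}

def ctr {n : ℕ} (c : Fin n → ℝ) (s : ℝ) (m : ℕ) (k : Fin n → ℤ) : Fin n → ℝ :=
  fun i => c i - s + k i * (2 * (s / 2 ^ m)) + s / 2 ^ m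

lemma cell_eq {n : ℕ} (c : Fin n → ℝ) {s : ℝ} (hs : 0 < s) (m : ℕ) (k : Fin n → ℤ) :
    cell c s m k = Set.univ.pi fun i =>
      Set.Ico (ctr c s m k i - s / 2 ^ m) (ctr c s m k i + s / 2 ^ m) := by
  ext x
  simp only [cell, Set.mem_ofPred_eq, Set.mem_pi, Set.mem_univ, true_imp_iff, Set.mem_Ico,
    funext_iff, pidx, ctr]
  refine forall_congr' fun i => ?_
  rw [Int.floor_eq_iff]
  have h2 : (0:ℝ) < 2 ^ m := by positivity
  have e : (x i - (c i - s)) / (2 * s) * 2 ^ m = (x i - (c i - s)) / (2 * (s / 2 ^ m)) := by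
    field_simp
  have hp : 0 < 2 * (s / 2 ^ m) := by positivity
  rw [e, le_div_iff₀ hp, div_lt_iff₀ hp]
  constructor
  · rintro ⟨h, h'⟩; constructor <;> linarith
  · rintro ⟨h, h'⟩; constructor <;> linarith

lemma cball_eq {n : ℕ} (c : Fin n → ℝ) {s : ℝ} (hs : 0 < s) :
    Metric.closedBall c s = Set.univ.pi fun i => Set.Icc (c i - s) (c i + s) := by
  rw [closedBall_pi _ hs.le]
  simp [Real.closedBall_eq_Icc]

lemma cell_ae {n : ℕ} (c : Fin n → ℝ) {s : ℝ} (hs : 0 < s) (m : ℕ) (k : Fin n → ℤ) :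
    cell c s m k =ᵐ[volume] Metric.closedBall (ctr c s m k) (s / 2 ^ m) := by
  rw [cell_eq c hs, cball_eq _ (by positivity)]
  rw [Set.pi_univ_Icc]
  exact Measure.univ_pi_Ico_ae_eq_Icc

lemma closure_cell {n : ℕ} (c : Fin n → ℝ) {s : ℝ} (hs : 0 < s) (m : ℕ) (k : Fin n → ℤ) :
    closure (cell c s m k) = Metric.closedBall (ctr c s m k) (s / 2 ^ m) := by
  have : 0 < s / 2 ^ m := by positivity
  rw [cell_eq c hs, cball_eq _ this, closure_pi_set]
  congr 1; funext i
  rw [closure_Ico]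
  intro h
  linarith

lemma cell_meas {n : ℕ} (c : Fin n → ℝ) {s : ℝ} (hs : 0 < s) (m : ℕ) (k : Fin n → ℤ) :
    MeasurableSet (cell c s m k) := by
  rw [cell_eq c hs]
  exact MeasurableSet.univ_pi fun i => measurableSet_Ico

lemma ctr_zero {n : ℕ} (c : Fin n → ℝ) (s : ℝ) : ctr c s 0 0 = c := by
  funext i; simp [ctr]

lemma pidx_mono {n : ℕ} (c : Fin n → ℝ) (s : ℝ) {j m : ℕ} (h : j ≤ m) {x y : Fin n → ℝ}
    (hxy : pidx c s m x = pidx c s m y) : pidx c s j x = pidx c s j y := by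
  funext i
  have := congrFun hxy i
  simp only [pidx] at this ⊢
  have key : ∀ t : ℝ, ⌊t * 2 ^ j⌋ = ⌊t * 2 ^ m⌋ / ((2 ^ (m - j) : ℕ) : ℤ) := by
    intro t
    rw [← Int.floor_div_natCast]
    congr 1
    obtain ⟨d, rfl⟩ := Nat.exists_eq_add_of_le h
    push_cast
    rw [Nat.add_sub_cancel_left, pow_add]
    field_simp
  rw [key, key, this]

lemma vol_ball {n : ℕ} (c : Fin n → ℝ) {s : ℝ} (hs : 0 < s) :
    volume (Metric.closedBall c s) = ENNReal.ofReal ((2 * s) ^ n) := by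
  rw [Real.volume_pi_closedBall _ hs.le, Fintype.card_fin]

lemma vol_ball_ne_zero {n : ℕ} (c : Fin n → ℝ) {s : ℝ} (hs : 0 < s) :
    volume (Metric.closedBall c s) ≠ 0 := by
  rw [vol_ball c hs]; simp; positivity

lemma vol_ball_ne_top {n : ℕ} (c : Fin n → ℝ) {s : ℝ} (hs : 0 < s) :
    volume (Metric.closedBall c s) ≠ ⊤ := by
  rw [vol_ball c hs]; simp


/-- Calderón–Zygmund decomposition. -/
lemma cz {n : ℕ} (c : Fin n → ℝ) {s : ℝ} (hs : 0 < s) (h : (Fin n → ℝ) → ℝ≥0∞)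
    (hm : AEMeasurable h volume) (L : ℝ≥0∞) (hL : L ≠ ⊤)
    (hQ : ∫⁻ x in Metric.closedBall c s, h x ≤ L * volume (Metric.closedBall c s)) :
    ∃ E ⊆ Metric.closedBall c s, MeasurableSet E ∧
      (∀ᵐ x, x ∈ Metric.closedBall c s → x ∉ E → h x ≤ L) ∧
      ∀ μ₁ μ₂ : Measure (Fin n → ℝ), μ₁ ≪ volume → μ₂ ≪ volume →
        (∀ c' s', 0 < s' → Metric.closedBall c' s' ⊆ Metric.closedBall c s →
          L * volume (Metric.closedBall c' s') ≤ ∫⁻ x in Metric.closedBall c' s', h x →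
          ∫⁻ x in Metric.closedBall c' s', h x ≤ 2 ^ n * L * volume (Metric.closedBall c' s') →
          μ₁ (Metric.closedBall c' s') ≤ μ₂ (Metric.closedBall c' s')) →
        μ₁ E ≤ μ₂ E := by
  set Q := Metric.closedBall c s with hQdef
  let Q0 := cell c s 0 0
  have hQ0ae : Q0 =ᵐ[volume] Q := by
    have := cell_ae c hs 0 0
    rwa [ctr_zero, pow_zero, div_one] at this
  have hQ0sub : Q0 ⊆ Q := by
    have := closure_cell c hs 0 0
    rw [ctr_zero, pow_zero, div_one] at this
    rw [hQdef, ← this]; exact subset_closure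
  let Bad : ℕ → (Fin n → ℤ) → Prop := fun m k =>
    L * volume (cell c s m k) < ∫⁻ x in cell c s m k, h x
  let S : ℕ → Set (Fin n → ℝ) := fun m =>
    {x | x ∈ Q0 ∧ Bad m (pidx c s m x) ∧ ∀ j < m, ¬ Bad j (pidx c s j x)}
  let T : ℕ × (Fin n → ℤ) → Set (Fin n → ℝ) := fun p => S p.1 ∩ cell c s p.1 p.2
  have hSinv : ∀ m x y, pidx c s m x = pidx c s m y → x ∈ S m → y ∈ S m := by
    rintro m x y hxy ⟨h1, h2, h3⟩
    refine ⟨?_, ?_, ?_⟩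
    · have := pidx_mono c s (Nat.zero_le m) hxy
      exact this.symm.trans h1
    · rwa [← hxy]
    · intro j hj
      rw [← pidx_mono c s hj.le hxy]; exact h3 j hj
  have hT : ∀ p, T p = ∅ ∨ (T p = cell c s p.1 p.2 ∧ (cell c s p.1 p.2).Nonempty) := by
    rintro ⟨m, k⟩
    rcases Set.eq_empty_or_nonempty (T (m, k)) with h0 | ⟨x, hx⟩
    · exact Or.inl h0
    · refine Or.inr ⟨?_, x, hx.2⟩
      apply Set.Subset.antisymm Set.inter_subset_right
      intro y hy
      exact ⟨hSinv m x y (hx.2.trans hy.symm) hx.1, hy⟩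
  have hTm : ∀ p, MeasurableSet (T p) := by
    intro p
    rcases hT p with h0 | h0
    · rw [h0]; exact MeasurableSet.empty
    · rw [h0.1]; exact cell_meas c hs _ _
  have hTd : Pairwise (Function.onFun Disjoint T) := by
    rintro ⟨m, k⟩ ⟨m', k'⟩ hne
    rw [Function.onFun, Set.disjoint_left]
    rintro x ⟨hx, hxc⟩ ⟨hx', hxc'⟩
    apply hne
    have hmm : m = m' := by
      rcases lt_trichotomy m m' with hlt | he | hlt
      · exact absurd hx.2.1 (hx'.2.2 m hlt)
      · exact he
      · exact absurd hx'.2.1 (hx.2.2 m' hlt)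
    subst hmm
    have : k = k' := hxc.symm.trans hxc'
    rw [this]
  have hball : ∀ m, 0 < s / 2 ^ m := fun m => by positivity
  have hcellvol : ∀ m k, volume (cell c s m k) = ENNReal.ofReal ((2 * (s / 2 ^ m)) ^ n) := by
    intro m k
    rw [measure_congr (cell_ae c hs m k), vol_ball _ (hball m)]
  have hlic : ∀ m k, ∫⁻ x in cell c s m k, h x
      = ∫⁻ x in Metric.closedBall (ctr c s m k) (s / 2 ^ m), h x := fun m k =>
    setLIntegral_congr (cell_ae c hs m k)
  refine ⟨⋃ p, T p, ?_, MeasurableSet.iUnion hTm, ?_, ?_⟩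
  · refine Set.iUnion_subset fun p => ?_
    exact fun x hx => hQ0sub hx.1.1
  · -- Lebesgue differentiation
    have hfin : ∫⁻ x, Q.indicator h x ≠ ⊤ := by
      rw [lintegral_indicator Metric.isClosed_closedBall.measurableSet]
      exact ne_top_of_le_ne_top (ENNReal.mul_ne_top hL (vol_ball_ne_top c hs)) hQ
    have hleb := (IsUnifLocDoublingMeasure.vitaliFamily (volume : Measure (Fin n → ℝ)) 1).ae_tendsto_lintegral_div
      (hm.indicator (Metric.isClosed_closedBall (x := c) (ε := s)).measurableSet) hfin
    have hae : ∀ᵐ x ∂(volume : Measure (Fin n → ℝ)), x ∈ Q → x ∈ Q0 := by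
      filter_upwards [hQ0ae.mem_iff] with x hx using hx.2
    filter_upwards [hleb, hae] with x hx hx0 hxQ hxE
    have hx0 := hx0 hxQ
    have hnb : ∀ m, ¬ Bad m (pidx c s m x) := by
      by_contra! hcon
      classical
      apply hxE
      rw [Set.mem_iUnion]
      refine ⟨(Nat.find hcon, pidx c s (Nat.find hcon) x), ⟨hx0, Nat.find_spec hcon, ?_⟩, rfl⟩
      intro j hj
      exact Nat.find_min hcon hj
    have hlim : Tendsto (fun m : ℕ => s / 2 ^ m) atTop (nhdsWithin 0 (Set.Ioi 0)) := by
      rw [tendsto_nhdsWithin_iff]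
      refine ⟨?_, Eventually.of_forall fun m => hball m⟩
      have := (tendsto_pow_atTop_nhds_zero_of_lt_one (r := (1/2 : ℝ)) (by norm_num) (by norm_num)).const_mul s
      simpa [div_eq_mul_inv] using this
    have ht := hx.comp (IsUnifLocDoublingMeasure.tendsto_closedBall_filterAt volume (K := 1) (x := x)
      (fun m => ctr c s m (pidx c s m x)) (fun m => s / 2 ^ m) hlim
      (Eventually.of_forall fun m => by
        rw [one_mul, ← closure_cell c hs]
        exact subset_closure rfl))
    rw [Set.indicator_of_mem hxQ] at ht
    refine le_of_tendsto ht (Eventually.of_forall fun m => ?_)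
    have h1 := not_lt.1 (hnb m)
    simp only [Function.comp]
    rw [hlic, measure_congr (cell_ae c hs m _)] at h1
    apply ENNReal.div_le_of_le_mul
    refine le_trans (lintegral_mono fun y => ?_) h1
    exact Set.indicator_le_self _ _ _
  · intro μ₁ μ₂ h1 h2 hle
    rw [measure_iUnion hTd hTm, measure_iUnion hTd hTm]
    refine ENNReal.tsum_le_tsum fun p => ?_
    obtain ⟨m, k⟩ := p
    rcases Set.eq_empty_or_nonempty (T (m, k)) with h0 | ⟨x, hx⟩
    · rw [h0]; simp
    have hTe : T (m, k) = cell c s m k := by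
      rcases hT (m, k) with h0 | h0
      · rw [h0] at hx; exact absurd hx (by simp)
      · exact h0.1
    rw [hTe, measure_congr (h1.ae_le (cell_ae c hs m k)), measure_congr (h2.ae_le (cell_ae c hs m k))]
    have hk : pidx c s m x = k := hx.2
    obtain ⟨hxQ0, hbad, hgood⟩ := hx.1
    simp only at hbad hgood
    refine hle _ _ (hball m) ?_ ?_ ?_
    · rw [← closure_cell c hs]
      refine closure_minimal ?_ Metric.isClosed_closedBall
      rw [← hTe]
      exact fun y hy => hQ0sub hy.1.1
    · rw [← hlic, ← measure_congr (cell_ae c hs m k), ← hk]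
      exact hbad.le
    · rw [← hlic, ← measure_congr (cell_ae c hs m k)]
      cases m with
      | zero =>
        exfalso
        have hx00 : pidx c s 0 x = 0 := hxQ0
        have hb : L * volume Q0 < ∫⁻ x in Q0, h x := by
          have := hbad
          rw [hx00] at this
          exact this
        rw [measure_congr hQ0ae, setLIntegral_congr hQ0ae] at hb
        exact absurd hQ (not_le.2 hb)
      | succ m =>
        have hg := not_lt.1 (hgood m (Nat.lt_succ_self m))
        have hsub : cell c s (m+1) k ⊆ cell c s m (pidx c s m x) := by
          intro y hy
          exact pidx_mono c s (Nat.le_succ m) (Eq.trans hy hk.symm)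
        refine (lintegral_mono_set hsub).trans (hg.trans ?_)
        rw [hcellvol, hcellvol]
        have : ((2 * (s / 2 ^ m)) ^ n : ℝ) = 2 ^ n * (2 * (s / 2 ^ (m+1))) ^ n := by
          rw [← mul_pow]; congr 1; rw [pow_succ]; field_simp
        rw [this, ENNReal.ofReal_mul (by positivity), ENNReal.ofReal_pow (by norm_num)]
        simp only [ENNReal.ofReal_ofNat]
        rw [← mul_assoc, mul_comm L]

def Gc (n : ℕ) (r : ℝ) : ℝ≥0∞ := 2 ^ (1 / r) * (2 ^ (n + 1)) ^ (1 / r)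

lemma Gc_ne_top (n : ℕ) {r : ℝ} (hr0 : 0 < r) : Gc n r ≠ ⊤ := by
  have : 0 ≤ 1 / r := by positivity
  unfold Gc
  refine ENNReal.mul_ne_top (ENNReal.rpow_ne_top_of_nonneg this (by simp))
    (ENNReal.rpow_ne_top_of_nonneg this (by simp))

lemma Gc_ge (n : ℕ) {r : ℝ} (hr0 : 0 < r) : 2 ^ (1 / r) ≤ Gc n r := by
  unfold Gc
  have : (1 : ℝ≥0∞) ≤ (2 ^ (n + 1)) ^ (1 / r) := by
    apply ENNReal.one_le_rpow _ (by positivity)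
    exact one_le_pow₀ (by norm_num)
  calc (2 : ℝ≥0∞) ^ (1 / r) = 2 ^ (1/r) * 1 := (mul_one _).symm
    _ ≤ _ := by gcongr

lemma delta_bound (n : ℕ) {r : ℝ} (hr0 : 0 < r) (hr1 : r < 1) (δ b b' : ℝ≥0∞)
    (h : δ ^ r ≤ 2 ^ n * (2 * b ^ r) + b' ^ r) : δ ≤ Gc n r * b + Gc n r * b' := by
  have hp : 0 ≤ 1 / r := by positivity
  have hp1 : 1 ≤ 1 / r := by rw [le_div_iff₀ hr0]; linarith
  have e : ∀ t : ℝ≥0∞, (t ^ r) ^ (1 / r) = t := fun t => by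
    rw [← ENNReal.rpow_mul, mul_one_div_cancel hr0.ne', ENNReal.rpow_one]
  have h1 := ENNReal.rpow_le_rpow h hp
  rw [e] at h1
  refine h1.trans ((ENNReal.rpow_add_le_mul_rpow_add_rpow _ _ hp1).trans ?_)
  rw [e, show (2:ℝ≥0∞) ^ n * (2 * b ^ r) = 2 ^ (n+1) * b ^ r by rw [pow_succ, mul_assoc],
    ENNReal.mul_rpow_of_nonneg _ _ hp, e, mul_add]
  have h2 : (2:ℝ≥0∞) ^ (1 / r - 1) ≤ 2 ^ (1 / r) :=
    ENNReal.rpow_le_rpow_of_exponent_le (by norm_num) (by linarith)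
  refine add_le_add ?_ ?_
  · rw [← mul_assoc]; unfold Gc; gcongr
  · exact mul_le_mul_left (h2.trans (Gc_ge n hr0)) _

lemma step {n : ℕ} {r : ℝ} (hr0 : 0 < r) (hr1 : r < 1) (A B K : ℝ≥0∞) (hA1 : 1 ≤ A) (hAt : A ≠ ⊤)
    (hB0 : B ≠ 0) (hBt : B ≠ ⊤)
    (W : Measure (Fin n → ℝ)) (hac : W ≪ volume)
    (hW0 : ∀ c s, 0 < s → W (Metric.closedBall c s) ≠ 0)
    (hWt : ∀ c s, 0 < s → W (Metric.closedBall c s) ≠ ⊤)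
    (hA : ∀ c s, 0 < s → ∀ S ⊆ Metric.closedBall c s, MeasurableSet S →
      W (Metric.closedBall c s) * volume S ≤ A * W S * volume (Metric.closedBall c s))
    (f : (Fin n → ℝ) → ℝ) (hf : AEMeasurable f volume) (κ : (Fin n → ℝ) → ℝ → ℝ)
    (hO : ∀ c s, 0 < s → ∫⁻ x in Metric.closedBall c s, ‖f x - κ c s‖ₑ ^ r ≤
      (B * (W (Metric.closedBall c s) / volume (Metric.closedBall c s))) ^ r *
        volume (Metric.closedBall c s))
    (Q0 : Set (Fin n → ℝ))
    (hK : ∀ c s, 0 < s → Metric.closedBall c s ⊆ Q0 →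
      ∫⁻ x in Metric.closedBall c s, ‖f x - κ c s‖ₑ ≤ K * W (Metric.closedBall c s))
    (c : Fin n → ℝ) (s : ℝ) (hs : 0 < s) (hQ : Metric.closedBall c s ⊆ Q0) :
    ∫⁻ x in Metric.closedBall c s, ‖f x - κ c s‖ₑ ≤
      3 * Gc n r * B * W (Metric.closedBall c s) +
        K * ((1 - (2 * A)⁻¹) * W (Metric.closedBall c s)) := by
  set Q := Metric.closedBall c s with hQd
  set v := volume Q with hv
  have hv0 : v ≠ 0 := vol_ball_ne_zero c hs
  have hvt : v ≠ ⊤ := vol_ball_ne_top c hs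
  set a := W Q / v with ha
  have hav : a * v = W Q := ENNReal.div_mul_cancel hv0 hvt
  have ha0 : a ≠ 0 := ENNReal.div_ne_zero.2 ⟨hW0 c s hs, hvt⟩
  have hat : a ≠ ⊤ := ENNReal.div_ne_top (hWt c s hs) hv0
  have hBa0 : B * a ≠ 0 := mul_ne_zero hB0 ha0
  have hBat : B * a ≠ ⊤ := ENNReal.mul_ne_top hBt hat
  set β := (B * a) ^ r with hβ
  have hβ0 : β ≠ 0 := by simp [hβ, ENNReal.rpow_eq_zero_iff, hBa0, hBat]
  have hβt : β ≠ ⊤ := ENNReal.rpow_ne_top_of_nonneg hr0.le hBat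
  have hmf : ∀ k : ℝ, AEMeasurable (fun x => ‖f x - k‖ₑ) volume := fun k =>
    (hf.sub_const k).enorm
  have hO1 : ∫⁻ x in Q, ‖f x - κ c s‖ₑ ^ r ≤ β * v := hO c s hs
  obtain ⟨E, hEQ, hEm, hgood, hmeas⟩ := cz c hs (fun x => ‖f x - κ c s‖ₑ ^ r)
    ((hmf _).pow_const r) (2 * β) (ENNReal.mul_ne_top (by simp) hβt)
    (hO1.trans (by
      rw [two_mul, add_mul]; exact le_self_add))
  have hQm : MeasurableSet Q := Metric.isClosed_closedBall.measurableSet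
  -- measure of E
  have hE1 : 2 * volume E ≤ v := by
    have h1 := hmeas ((2 * β) • volume) (volume.withDensity fun x => ‖f x - κ c s‖ₑ ^ r)
      (Measure.smul_absolutelyContinuous) (withDensity_absolutelyContinuous _ _) (by
        intro c' s' hs' _ h1 _
        rw [withDensity_apply _ Metric.isClosed_closedBall.measurableSet]
        simpa using h1)
    rw [withDensity_apply _ hEm] at h1
    simp only [Measure.smul_apply, smul_eq_mul] at h1
    have h2 := h1.trans ((lintegral_mono_set hEQ).trans hO1)
    rw [mul_comm 2 β, mul_assoc] at h2
    exact (ENNReal.mul_le_mul_iff_right hβ0 hβt).1 h2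
  have hEt : volume E ≠ ⊤ := ne_top_of_le_ne_top hvt (measure_mono hEQ)
  have hdiff : v ≤ 2 * volume (Q \ E) := by
    have h1 : volume E + volume (Q \ E) = v := by
      rw [add_comm]
      have := measure_sdiff_add_inter (μ := (volume : Measure (Fin n → ℝ))) Q hEm
      rwa [Set.inter_eq_right.2 hEQ] at this
    have h2 : volume E + volume E ≤ volume E + volume (Q \ E) := by
      rw [h1, ← two_mul]; exact hE1
    have h3 := (ENNReal.add_le_add_iff_left hEt).1 h2
    rw [← h1, two_mul]; gcongr
  have hA0 : A ≠ 0 := (zero_lt_one.trans_le hA1).ne'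
  have h2A0 : 2 * A ≠ 0 := mul_ne_zero (by simp) hA0
  have h2At : 2 * A ≠ ⊤ := ENNReal.mul_ne_top (by simp) hAt
  have hWd : (2 * A)⁻¹ * W Q ≤ W (Q \ E) := by
    have h1 := hA c s hs (Q \ E) Set.sdiff_subset (hQm.diff hEm)
    have h2 : W Q * v ≤ (2 * A * W (Q \ E)) * v := by
      calc W Q * v ≤ W Q * (2 * volume (Q \ E)) := by gcongr
        _ = 2 * (W Q * volume (Q \ E)) := by ring
        _ ≤ 2 * (A * W (Q \ E) * v) := by gcongr
        _ = _ := by ring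
    have h3 := (ENNReal.mul_le_mul_iff_left hv0 hvt).1 h2
    rw [mul_comm, ← div_eq_mul_inv]
    exact ENNReal.div_le_of_le_mul (by rwa [mul_comm])
  have hWE : W E ≤ (1 - (2 * A)⁻¹) * W Q := by
    have h1 : W E + W (Q \ E) = W Q := by
      rw [add_comm]
      have := measure_sdiff_add_inter (μ := W) Q hEm
      rwa [Set.inter_eq_right.2 hEQ] at this
    rw [ENNReal.sub_mul (fun _ _ => hWt c s hs), one_mul]
    apply ENNReal.le_sub_of_add_le_right
    · exact ENNReal.mul_ne_top (ENNReal.inv_ne_top.2 h2A0) (hWt c s hs)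
    · rw [← h1] at hWd ⊢
      gcongr
  set G := Gc n r with hG
  have hbadI : ∫⁻ x in E, ‖f x - κ c s‖ₑ ≤ (K + G * B) * W E + (G * (B * a)) * volume E := by
    have h1 := hmeas (volume.withDensity fun x => ‖f x - κ c s‖ₑ)
      ((K + G * B) • W + (G * (B * a)) • volume)
      (withDensity_absolutelyContinuous _ _)
      (by
        refine Measure.AbsolutelyContinuous.add_left ?_ ?_
        · exact Measure.smul_absolutelyContinuous.trans hac
        · exact Measure.smul_absolutelyContinuous) (by
        intro c' s' hs' hsub _ h2
        rw [withDensity_apply _ Metric.isClosed_closedBall.measurableSet]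
        simp only [Measure.add_apply, Measure.smul_apply, smul_eq_mul]
        set Q' := Metric.closedBall c' s' with hQ'
        set v' := volume Q' with hv'
        have hv0' : v' ≠ 0 := vol_ball_ne_zero c' hs'
        have hvt' : v' ≠ ⊤ := vol_ball_ne_top c' hs'
        set δ := ‖κ c' s' - κ c s‖ₑ with hδ
        have hd : δ ^ r * v' ≤ (2 ^ n * (2 * β) + (B * (W Q' / v')) ^ r) * v' := by
          calc δ ^ r * v' = ∫⁻ x in Q', δ ^ r := by rw [setLIntegral_const]
            _ ≤ ∫⁻ x in Q', (‖f x - κ c s‖ₑ ^ r + ‖f x - κ c' s'‖ₑ ^ r) := by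
                refine lintegral_mono fun x => ?_
                refine le_trans ?_ (ENNReal.rpow_add_le_add_rpow _ _ hr0.le hr1.le)
                refine ENNReal.rpow_le_rpow ?_ hr0.le
                have : κ c' s' - κ c s = (f x - κ c s) - (f x - κ c' s') := by ring
                rw [hδ, this]
                exact enorm_sub_le
            _ = (∫⁻ x in Q', ‖f x - κ c s‖ₑ ^ r) + ∫⁻ x in Q', ‖f x - κ c' s'‖ₑ ^ r :=
                lintegral_add_left' ((hmf _).pow_const r).restrict _
            _ ≤ 2 ^ n * (2 * β) * v' + (B * (W Q' / v')) ^ r * v' := add_le_add h2 (hO c' s' hs')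
            _ = _ := by ring
        have hd2 := delta_bound n hr0 hr1 δ _ _ ((ENNReal.mul_le_mul_iff_left hv0' hvt').1 hd)
        calc ∫⁻ x in Q', ‖f x - κ c s‖ₑ ≤ ∫⁻ x in Q', (‖f x - κ c' s'‖ₑ + δ) := by
              refine lintegral_mono fun x => ?_
              have : f x - κ c s = (f x - κ c' s') + (κ c' s' - κ c s) := by ring
              simp only [this]
              exact enorm_add_le _ _
          _ = (∫⁻ x in Q', ‖f x - κ c' s'‖ₑ) + δ * v' := by
              rw [lintegral_add_right _ measurable_const, setLIntegral_const]
          _ ≤ K * W Q' + (G * (B * a) + G * (B * (W Q' / v'))) * v' := by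
              refine add_le_add (hK c' s' hs' (hsub.trans hQ)) ?_
              exact mul_le_mul_left hd2 _
          _ = K * W Q' + G * B * (W Q' / v' * v') + G * (B * a) * v' := by ring
          _ = _ := by rw [ENNReal.div_mul_cancel hv0' hvt']; ring)
    rw [withDensity_apply _ hEm] at h1
    simpa using h1
  have hgoodI : ∫⁻ x in Q \ E, ‖f x - κ c s‖ₑ ≤ (G * (B * a)) * v := by
    calc ∫⁻ x in Q \ E, ‖f x - κ c s‖ₑ ≤ ∫⁻ x in Q \ E, (G * (B * a)) := by
          refine lintegral_mono_ae ?_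
          rw [ae_restrict_iff' (hQm.diff hEm)]
          filter_upwards [hgood] with x hx hxm
          have h1 := hx hxm.1 hxm.2
          have h2 := ENNReal.rpow_le_rpow h1 (show 0 ≤ 1 / r by positivity)
          rw [← ENNReal.rpow_mul, mul_one_div_cancel hr0.ne', ENNReal.rpow_one,
            ENNReal.mul_rpow_of_nonneg _ _ (show 0 ≤ 1 / r by positivity), hβ, ← ENNReal.rpow_mul,
            mul_one_div_cancel hr0.ne', ENNReal.rpow_one] at h2
          exact h2.trans (mul_le_mul_left (Gc_ge n hr0) _)
      _ = (G * (B * a)) * volume (Q \ E) := by rw [setLIntegral_const]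
      _ ≤ _ := by gcongr; exact measure_mono Set.sdiff_subset
  calc ∫⁻ x in Q, ‖f x - κ c s‖ₑ = (∫⁻ x in E, ‖f x - κ c s‖ₑ) + ∫⁻ x in Q \ E, ‖f x - κ c s‖ₑ := by
        have := lintegral_inter_add_sdiff (μ := (volume : Measure (Fin n → ℝ)))
          (fun x => ‖f x - κ c s‖ₑ) Q hEm
        rw [Set.inter_eq_right.2 hEQ] at this
        exact this.symm
    _ ≤ ((K + G * B) * W E + (G * (B * a)) * volume E) + (G * (B * a)) * v :=
        add_le_add hbadI hgoodI
    _ ≤ ((K + G * B) * W E + (G * (B * a)) * v) + (G * (B * a)) * v := by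
        gcongr; exact measure_mono hEQ
    _ = K * W E + (G * B * W E + 2 * (G * B * (a * v))) := by ring
    _ ≤ K * ((1 - (2 * A)⁻¹) * W Q) + (G * B * W Q + 2 * (G * B * (a * v))) := by
        gcongr
    _ = _ := by rw [hav]; ring

lemma bounded_case {n : ℕ} {r : ℝ} (hr0 : 0 < r) (hr1 : r < 1) (A B : ℝ≥0∞) (hA1 : 1 ≤ A) (hAt : A ≠ ⊤)
    (hB0 : B ≠ 0) (hBt : B ≠ ⊤)
    (W : Measure (Fin n → ℝ)) (hac : W ≪ volume)
    (hW0 : ∀ c s, 0 < s → W (Metric.closedBall c s) ≠ 0)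
    (hWt : ∀ c s, 0 < s → W (Metric.closedBall c s) ≠ ⊤)
    (hA : ∀ c s, 0 < s → ∀ S ⊆ Metric.closedBall c s, MeasurableSet S →
      W (Metric.closedBall c s) * volume S ≤ A * W S * volume (Metric.closedBall c s))
    (f : (Fin n → ℝ) → ℝ) (hf : AEMeasurable f volume) (κ : (Fin n → ℝ) → ℝ → ℝ)
    (hO : ∀ c s, 0 < s → ∫⁻ x in Metric.closedBall c s, ‖f x - κ c s‖ₑ ^ r ≤
      (B * (W (Metric.closedBall c s) / volume (Metric.closedBall c s))) ^ r *
        volume (Metric.closedBall c s))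
    (M : ℝ≥0∞) (hMt : M ≠ ⊤) (hM : ∀ x c s, ‖f x - κ c s‖ₑ ≤ M)
    (c : Fin n → ℝ) (s : ℝ) (hs : 0 < s) :
    ∫⁻ x in Metric.closedBall c s, ‖f x - κ c s‖ₑ ≤
      (2 * A) * (3 * Gc n r * B) * W (Metric.closedBall c s) := by
  set Q0 := Metric.closedBall c s with hQ0
  let I : Type := {p : (Fin n → ℝ) × ℝ // 0 < p.2 ∧ Metric.closedBall p.1 p.2 ⊆ Q0}
  set K : ℝ≥0∞ := ⨆ p : I, (∫⁻ x in Metric.closedBall p.1.1 p.1.2, ‖f x - κ p.1.1 p.1.2‖ₑ) /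
    W (Metric.closedBall p.1.1 p.1.2) with hKd
  have hK : ∀ c s, 0 < s → Metric.closedBall c s ⊆ Q0 →
      ∫⁻ x in Metric.closedBall c s, ‖f x - κ c s‖ₑ ≤ K * W (Metric.closedBall c s) := by
    intro c' s' hs' hsub
    rw [← ENNReal.div_le_iff (hW0 c' s' hs') (hWt c' s' hs')]
    exact le_iSup (fun p : I => (∫⁻ x in Metric.closedBall p.1.1 p.1.2, ‖f x - κ p.1.1 p.1.2‖ₑ) /
      W (Metric.closedBall p.1.1 p.1.2)) ⟨(c', s'), hs', hsub⟩
  have hKt : K ≠ ⊤ := by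
    have hb : K ≤ M * (A * volume Q0 / W Q0) := by
      refine iSup_le ?_
      rintro ⟨⟨c', s'⟩, hs', hsub⟩
      simp only at hs' hsub ⊢
      refine ENNReal.div_le_of_le_mul ?_
      calc ∫⁻ x in Metric.closedBall c' s', ‖f x - κ c' s'‖ₑ
          ≤ ∫⁻ x in Metric.closedBall c' s', M := lintegral_mono fun x => hM x c' s'
        _ = M * volume (Metric.closedBall c' s') := by rw [setLIntegral_const]
        _ ≤ M * (A * volume Q0 / W Q0 * W (Metric.closedBall c' s')) := by
            gcongr
            have h1 := hA c s hs _ hsub Metric.isClosed_closedBall.measurableSet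
            rw [mul_comm] at h1
            have h2 := (ENNReal.le_div_iff_mul_le (Or.inl (hW0 c s hs)) (Or.inl (hWt c s hs))).2 h1
            refine h2.trans (le_of_eq ?_)
            simp only [div_eq_mul_inv]
            ring
        _ = _ := by ring
    refine ne_top_of_le_ne_top ?_ hb
    exact ENNReal.mul_ne_top hMt (ENNReal.div_ne_top (ENNReal.mul_ne_top hAt (vol_ball_ne_top c hs))
      (hW0 c s hs))
  have hA0 : A ≠ 0 := (zero_lt_one.trans_le hA1).ne'
  have h2A0 : 2 * A ≠ 0 := mul_ne_zero (by simp) hA0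
  have h2At : 2 * A ≠ ⊤ := ENNReal.mul_ne_top (by simp) hAt
  have h2A1 : (2 * A)⁻¹ ≤ 1 := by
    rw [ENNReal.inv_le_one]
    exact hA1.trans (by rw [two_mul]; exact le_self_add)
  have hle : K ≤ 3 * Gc n r * B + K * (1 - (2 * A)⁻¹) := by
    refine iSup_le ?_
    rintro ⟨⟨c', s'⟩, hs', hsub⟩
    simp only at hs' hsub ⊢
    refine ENNReal.div_le_of_le_mul ?_
    refine (step hr0 hr1 A B K hA1 hAt hB0 hBt W hac hW0 hWt hA f hf κ hO Q0 hK c' s' hs' hsub).trans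
      (le_of_eq ?_)
    ring
  have hK2 : K * (2 * A)⁻¹ ≤ 3 * Gc n r * B := by
    have hsum : K * (2 * A)⁻¹ + K * (1 - (2 * A)⁻¹) = K := by
      rw [← mul_add, add_tsub_cancel_of_le h2A1, mul_one]
    rw [← ENNReal.add_le_add_iff_right (a := K * (1 - (2 * A)⁻¹)), hsum]
    · exact hle
    · exact ENNReal.mul_ne_top hKt (ne_top_of_le_ne_top ENNReal.one_ne_top tsub_le_self)
  have hK3 : K ≤ (2 * A) * (3 * Gc n r * B) := by
    rw [← div_eq_mul_inv, ENNReal.div_le_iff h2A0 h2At] at hK2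
    rwa [mul_comm]
  exact (hK c s hs subset_rfl).trans (mul_le_mul_left hK3 _)

def trunc (M : ℝ) (t : ℝ) : ℝ := max (-M) (min t M)

lemma trunc_lip (M a b : ℝ) : |trunc M a - trunc M b| ≤ |a - b| := by
  unfold trunc
  refine (abs_max_sub_max_le_max _ _ _ _).trans ?_
  simp only [sub_self, abs_zero]
  refine max_le (abs_nonneg _) ?_
  refine (abs_min_sub_min_le_max _ _ _ _).trans ?_
  simp

lemma trunc_bd {M : ℝ} (hM : 0 ≤ M) (a : ℝ) : |trunc M a| ≤ M := by
  unfold trunc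
  rw [abs_le]
  exact ⟨le_max_left _ _, max_le (by linarith) (min_le_right _ _)⟩

lemma trunc_eq {M a : ℝ} (h : |a| ≤ M) : trunc M a = a := by
  rw [abs_le] at h
  unfold trunc
  rw [min_eq_left h.2, max_eq_right h.1]

lemma trunc_meas (M : ℝ) : Measurable (trunc M) := by
  unfold trunc; fun_prop

lemma general_case {n : ℕ} {r : ℝ} (hr0 : 0 < r) (hr1 : r < 1) (A B : ℝ≥0∞) (hA1 : 1 ≤ A) (hAt : A ≠ ⊤)
    (hB0 : B ≠ 0) (hBt : B ≠ ⊤)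
    (W : Measure (Fin n → ℝ)) (hac : W ≪ volume)
    (hW0 : ∀ c s, 0 < s → W (Metric.closedBall c s) ≠ 0)
    (hWt : ∀ c s, 0 < s → W (Metric.closedBall c s) ≠ ⊤)
    (hA : ∀ c s, 0 < s → ∀ S ⊆ Metric.closedBall c s, MeasurableSet S →
      W (Metric.closedBall c s) * volume S ≤ A * W S * volume (Metric.closedBall c s))
    (f : (Fin n → ℝ) → ℝ) (hf : AEMeasurable f volume) (κ : (Fin n → ℝ) → ℝ → ℝ)
    (hO : ∀ c s, 0 < s → ∫⁻ x in Metric.closedBall c s, ‖f x - κ c s‖ₑ ^ r ≤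
      (B * (W (Metric.closedBall c s) / volume (Metric.closedBall c s))) ^ r *
        volume (Metric.closedBall c s))
    (c : Fin n → ℝ) (s : ℝ) (hs : 0 < s) :
    ∫⁻ x in Metric.closedBall c s, ‖f x - κ c s‖ₑ ≤
      (2 * A) * (3 * Gc n r * B) * W (Metric.closedBall c s) := by
  have hlip : ∀ (M a b : ℝ), ‖trunc M a - trunc M b‖ₑ ≤ ‖a - b‖ₑ := fun M a b => by
    rw [Real.enorm_eq_ofReal_abs, Real.enorm_eq_ofReal_abs]
    exact ENNReal.ofReal_le_ofReal (trunc_lip M a b)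
  have hb : ∀ j : ℕ, ∫⁻ x in Metric.closedBall c s, ‖trunc j (f x) - trunc j (κ c s)‖ₑ ≤
      (2 * A) * (3 * Gc n r * B) * W (Metric.closedBall c s) := by
    intro j
    refine bounded_case hr0 hr1 A B hA1 hAt hB0 hBt W hac hW0 hWt hA (fun x => trunc j (f x))
      ((trunc_meas j).comp_aemeasurable hf) (fun c s => trunc j (κ c s)) ?_
      (ENNReal.ofReal (2 * j)) ENNReal.ofReal_ne_top ?_ c s hs
    · intro c s hs
      refine le_trans (lintegral_mono fun x => ?_) (hO c s hs)
      exact ENNReal.rpow_le_rpow (hlip _ _ _) hr0.le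
    · intro x c s
      rw [Real.enorm_eq_ofReal_abs]
      apply ENNReal.ofReal_le_ofReal
      refine (abs_sub _ _).trans ?_
      have h1 := trunc_bd (Nat.cast_nonneg (α := ℝ) j) (f x)
      have h2 := trunc_bd (Nat.cast_nonneg (α := ℝ) j) (κ c s)
      linarith
  have hlim : ∀ x, ‖f x - κ c s‖ₑ =
      liminf (fun j : ℕ => ‖trunc j (f x) - trunc j (κ c s)‖ₑ) atTop := by
    intro x
    symm
    apply Tendsto.liminf_eq
    refine tendsto_const_nhds.congr' ?_
    obtain ⟨j0, hj0⟩ := exists_nat_ge (max |f x| |κ c s|)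
    filter_upwards [eventually_ge_atTop j0] with j hj
    have hj' : (j0 : ℝ) ≤ j := by exact_mod_cast hj
    rw [trunc_eq ((le_max_left _ _).trans (hj0.trans hj')),
      trunc_eq ((le_max_right _ _).trans (hj0.trans hj'))]
  calc ∫⁻ x in Metric.closedBall c s, ‖f x - κ c s‖ₑ
      = ∫⁻ x in Metric.closedBall c s,
        liminf (fun j : ℕ => ‖trunc j (f x) - trunc j (κ c s)‖ₑ) atTop := by
        simp only [← hlim]
    _ ≤ liminf (fun j : ℕ => ∫⁻ x in Metric.closedBall c s,
          ‖trunc j (f x) - trunc j (κ c s)‖ₑ) atTop := by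
        apply lintegral_liminf_le'
        intro j
        exact ((((trunc_meas j).comp_aemeasurable hf).sub_const _).enorm).restrict
    _ ≤ _ := by
        refine (liminf_le_liminf (Eventually.of_forall hb)).trans ?_
        simp

lemma preim_cube {n : ℕ} (c : Rn n) {ρ : ℝ} (hρ : 0 < ρ) :
    (MeasurableEquiv.toLp 2 (Fin n → ℝ)) ⁻¹' (cube c ρ) = Metric.closedBall (WithLp.ofLp c) (ρ / 2) := by
  rw [cball_eq _ (by positivity)]
  ext x
  simp only [cube, Set.mem_preimage, Set.mem_ofPred_eq, Set.mem_pi, Set.mem_univ, true_imp_iff,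
    Set.mem_Icc, MeasurableEquiv.toLp_apply]
  refine forall_congr' fun i => ?_
  rw [abs_le]
  constructor
  · rintro ⟨h, h'⟩; constructor <;> linarith
  · rintro ⟨h, h'⟩; constructor <;> linarith

lemma preim_cube' {n : ℕ} (c : Fin n → ℝ) {s : ℝ} (hs : 0 < s) :
    (MeasurableEquiv.toLp 2 (Fin n → ℝ)) ⁻¹' (cube (WithLp.toLp 2 c) (2 * s)) = Metric.closedBall c s := by
  rw [preim_cube _ (by positivity)]
  congr 1; ring

lemma mp (n : ℕ) : MeasurePreserving (MeasurableEquiv.toLp 2 (Fin n → ℝ)) volume volume :=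
  PiLp.volume_preserving_toLp (Fin n)

lemma tr {n : ℕ} (F : Rn n → ℝ≥0∞) (c : Fin n → ℝ) {s : ℝ} (hs : 0 < s) :
    ∫⁻ x in Metric.closedBall c s, F (MeasurableEquiv.toLp 2 (Fin n → ℝ) x) =
      ∫⁻ x in cube (WithLp.toLp 2 c) (2 * s), F x := by
  rw [← preim_cube' c hs]
  exact (mp n).setLIntegral_comp_preimage_emb (MeasurableEquiv.measurableEmbedding _) F _

lemma cube_compact {n : ℕ} (c : Rn n) {ρ : ℝ} (hρ : 0 < ρ) : IsCompact (cube c ρ) := by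
  have h := (isCompact_closedBall (WithLp.ofLp c) (ρ / 2)).image (PiLp.continuous_toLp 2 (fun _ : Fin n => ℝ))
  convert h using 1
  rw [← preim_cube c hρ]
  exact (Set.image_preimage_eq _ (MeasurableEquiv.toLp 2 (Fin n → ℝ)).surjective).symm

lemma cube_meas {n : ℕ} (c : Rn n) {ρ : ℝ} (hρ : 0 < ρ) : MeasurableSet (cube c ρ) :=
  (cube_compact c hρ).isClosed.measurableSet

lemma vol_cube {n : ℕ} (c : Rn n) {ρ : ℝ} (hρ : 0 < ρ) :
    volume (cube c ρ) = ENNReal.ofReal (ρ ^ n) := by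
  rw [← (mp n).measure_preimage (cube_meas c hρ).nullMeasurableSet, preim_cube c hρ,
    vol_ball _ (by positivity)]
  congr 2; ring

lemma wMeas_pos {n : ℕ} {ω : Rn n → ℝ} (h0 : ∀ x, 0 < ω x) (hl : LocallyIntegrable ω volume)
    (c : Rn n) {ρ : ℝ} (hρ : 0 < ρ) : 0 < wMeas ω (cube c ρ) := by
  unfold wMeas
  have hi := hl.integrableOn_isCompact (cube_compact c hρ)
  rw [integral_pos_iff_support_of_nonneg (fun x => (h0 x).le) hi]
  have : Function.support ω = Set.univ := by
    ext x; simp [(h0 x).ne']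
  rw [this, Measure.restrict_apply_univ, vol_cube c hρ]
  simp; positivity

lemma lint_w {n : ℕ} {ω : Rn n → ℝ} (h0 : ∀ x, 0 < ω x) (hl : LocallyIntegrable ω volume)
    (c : Rn n) {ρ : ℝ} (hρ : 0 < ρ) :
    ∫⁻ x in cube c ρ, ENNReal.ofReal (ω x) = ENNReal.ofReal (wMeas ω (cube c ρ)) := by
  unfold wMeas
  rw [ofReal_integral_eq_lintegral_ofReal (hl.integrableOn_isCompact (cube_compact c hρ))]
  exact Eventually.of_forall fun x => (h0 x).le

lemma int_mix {n : ℕ} {r : ℝ} (hr0 : 0 < r) (hr1 : r < 1) {ω f : Rn n → ℝ} (h0 : ∀ x, 0 < ω x)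
    (hl : LocallyIntegrable ω volume) (hf : LocallyIntegrable f volume) (k : ℝ)
    (c : Rn n) {ρ : ℝ} (hρ : 0 < ρ) :
    IntegrableOn (fun x => |f x - k| ^ r * ω x ^ (1 - r)) (cube c ρ) := by
  have hi := hl.integrableOn_isCompact (cube_compact c hρ)
  have hfi := hf.integrableOn_isCompact (cube_compact c hρ)
  have hk : IntegrableOn (fun _ : Rn n => k) (cube c ρ) :=
    integrableOn_const (by rw [vol_cube c hρ]; simp)
  have hfk : IntegrableOn (fun x => |f x - k|) (cube c ρ) := (hfi.sub hk).abs
  refine Integrable.mono' ((hfk.const_mul r).add (hi.const_mul (1 - r))) ?_ ?_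
  · exact ((hfk.aestronglyMeasurable.aemeasurable.pow_const r).mul
      (hi.aestronglyMeasurable.aemeasurable.pow_const (1-r))).aestronglyMeasurable
  · refine Eventually.of_forall fun x => ?_
    have hx := (h0 x).le
    rw [Real.norm_of_nonneg (by positivity)]
    exact Real.geom_mean_le_arith_mean2_weighted hr0.le (by linarith) (abs_nonneg _) hx (by ring)

def Dc (n : ℕ) (r A : ℝ) : ℝ :=
  ((2 * ENNReal.ofReal A) * (3 * Gc n r * ENNReal.ofReal A ^ ((1 - r) / r))).toReal

lemma core_Rn {n : ℕ} {r A : ℝ} (hr0 : 0 < r) (hr1 : r < 1) {ω f : Rn n → ℝ} (hω : IsA1 ω A)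
    (hf : LocallyIntegrable f volume) {N : ℝ} (hN : 0 < N) (κ : Rn n → ℝ → ℝ)
    (hκ : ∀ c ρ, 0 < ρ → ∫ x in cube c ρ, |f x - κ c ρ| ^ r * ω x ^ (1 - r) ≤
      N ^ r * wMeas ω (cube c ρ)) (c : Rn n) (ρ : ℝ) (hρ : 0 < ρ) :
    ∫ x in cube c ρ, |f x - κ c ρ| ≤ Dc n r A * N * wMeas ω (cube c ρ) := by
  obtain ⟨h0, hl, hA1, hA⟩ := hω
  set T := MeasurableEquiv.toLp 2 (Fin n → ℝ) with hT
  set Ae := ENNReal.ofReal A with hAe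
  have hA0 : 0 < A := by linarith
  have hAe0 : Ae ≠ 0 := by simp [hAe, hA0]
  have hAet : Ae ≠ ⊤ := ENNReal.ofReal_ne_top
  have hp : 0 ≤ (1 - r) / r := div_nonneg (by linarith) hr0.le
  set B := Ae ^ ((1 - r) / r) * ENNReal.ofReal N with hB
  have hApt : Ae ^ ((1 - r) / r) ≠ ⊤ := ENNReal.rpow_ne_top_of_nonneg hp hAet
  have hB0 : B ≠ 0 := by
    refine mul_ne_zero ?_ (by simp [hN])
    simp [ENNReal.rpow_eq_zero_iff, hAe0, hAet]
  have hBt : B ≠ ⊤ := ENNReal.mul_ne_top hApt ENNReal.ofReal_ne_top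
  let W : Measure (Fin n → ℝ) := volume.withDensity fun x => ENNReal.ofReal (ω (T x))
  have hWb : ∀ c s, 0 < s → W (Metric.closedBall c s) =
      ENNReal.ofReal (wMeas ω (cube (WithLp.toLp 2 c) (2 * s))) := by
    intro c s hs
    rw [withDensity_apply _ Metric.isClosed_closedBall.measurableSet,
      tr (fun x => ENNReal.ofReal (ω x)) c hs, lint_w h0 hl _ (by positivity)]
  have hW0 : ∀ c s, 0 < s → W (Metric.closedBall c s) ≠ 0 := by
    intro c s hs
    rw [hWb c s hs]
    simp [wMeas_pos h0 hl _ (show 0 < 2 * s by positivity)]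
  have hWt : ∀ c s, 0 < s → W (Metric.closedBall c s) ≠ ⊤ := by
    intro c s hs
    rw [hWb c s hs]; exact ENNReal.ofReal_ne_top
  have hpt : ∀ c s, 0 < s → ∀ᵐ x ∂(volume : Measure (Fin n → ℝ)), x ∈ Metric.closedBall c s →
      W (Metric.closedBall c s) / volume (Metric.closedBall c s) ≤ Ae * ENNReal.ofReal (ω (T x)) := by
    intro c s hs
    have h1 := (mp n).quasiMeasurePreserving.ae (hA (WithLp.toLp 2 c) (2 * s) (by positivity))
    filter_upwards [h1] with x hx hxm
    rw [← preim_cube' c hs] at hxm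
    have h2 := hx hxm
    rw [hWb c s hs, vol_ball c hs, ← ENNReal.ofReal_div_of_pos (by positivity), hAe,
      ← ENNReal.ofReal_mul hA0.le]
    exact ENNReal.ofReal_le_ofReal h2
  have hmain := general_case hr0 hr1 Ae B (by simpa [hAe] using hA1) hAet hB0 hBt W
    (withDensity_absolutelyContinuous _ _) hW0 hWt (by
      intro c s hs S hS hSm
      set Q := Metric.closedBall c s
      have hv0 : volume Q ≠ 0 := vol_ball_ne_zero c hs
      have hvt : volume Q ≠ ⊤ := vol_ball_ne_top c hs
      have h1 : W Q / volume Q * volume S ≤ Ae * W S := by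
        calc W Q / volume Q * volume S = ∫⁻ x in S, W Q / volume Q := by rw [setLIntegral_const]
          _ ≤ ∫⁻ x in S, Ae * ENNReal.ofReal (ω (T x)) := by
            refine lintegral_mono_ae ?_
            rw [ae_restrict_iff' hSm]
            filter_upwards [hpt c s hs] with x hx hxS using hx (hS hxS)
          _ = Ae * W S := by
            rw [lintegral_const_mul' _ _ hAet, withDensity_apply _ hSm]
      calc W Q * volume S = (W Q / volume Q * volume Q) * volume S := by
            rw [ENNReal.div_mul_cancel hv0 hvt]
        _ = (W Q / volume Q * volume S) * volume Q := by ring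
        _ ≤ _ := by gcongr)
    (fun x => f (T x))
    (hf.aestronglyMeasurable.aemeasurable.comp_quasiMeasurePreserving (mp n).quasiMeasurePreserving)
    (fun c s => κ (WithLp.toLp 2 c) (2 * s)) (by
      intro c s hs
      set Q := Metric.closedBall c s
      have hv0 : volume Q ≠ 0 := vol_ball_ne_zero c hs
      have hvt : volume Q ≠ ⊤ := vol_ball_ne_top c hs
      set a := W Q / volume Q with ha
      have hav : a * volume Q = W Q := ENNReal.div_mul_cancel hv0 hvt
      have ha0 : a ≠ 0 := ENNReal.div_ne_zero.2 ⟨hW0 c s hs, hvt⟩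
      have hat : a ≠ ⊤ := ENNReal.div_ne_top (hWt c s hs) hv0
      have hr1' : 0 ≤ 1 - r := by linarith
      set k := κ (WithLp.toLp 2 c) (2 * s) with hk
      have hmix : ∫⁻ x in Q, ‖f (T x) - k‖ₑ ^ r * ENNReal.ofReal (ω (T x)) ^ (1 - r) ≤
          ENNReal.ofReal N ^ r * W Q := by
        rw [tr (fun x => ‖f x - k‖ₑ ^ r * ENNReal.ofReal (ω x) ^ (1 - r)) c hs, hWb c s hs,
          ENNReal.ofReal_rpow_of_nonneg hN.le hr0.le, ← ENNReal.ofReal_mul (by positivity)]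
        refine le_trans (le_of_eq ?_) (ENNReal.ofReal_le_ofReal (hκ (WithLp.toLp 2 c) (2 * s) (by positivity)))
        rw [ofReal_integral_eq_lintegral_ofReal (int_mix hr0 hr1 h0 hl hf k _ (by positivity))]
        · refine lintegral_congr fun x => ?_
          rw [Real.enorm_eq_ofReal_abs, ENNReal.ofReal_rpow_of_nonneg (abs_nonneg _) hr0.le,
            ENNReal.ofReal_rpow_of_nonneg (h0 x).le hr1', ← ENNReal.ofReal_mul (by positivity)]
        · refine Eventually.of_forall fun x => ?_
          have := (h0 x).le
          simp only [Pi.zero_apply]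
          positivity
      have hat' : a ^ (1 - r) ≠ ⊤ := ENNReal.rpow_ne_top_of_nonneg hr1' hat
      have hat0 : a ^ (1 - r) ≠ 0 := by simp [ENNReal.rpow_eq_zero_iff, ha0, hat]
      have hAp' : Ae ^ (1 - r) ≠ ⊤ := ENNReal.rpow_ne_top_of_nonneg hr1' hAet
      rw [← ENNReal.mul_le_mul_iff_right hat0 hat', ← lintegral_const_mul' _ _ hat']
      calc ∫⁻ x in Q, a ^ (1 - r) * ‖f (T x) - k‖ₑ ^ r
          ≤ ∫⁻ x in Q, Ae ^ (1 - r) * (‖f (T x) - k‖ₑ ^ r * ENNReal.ofReal (ω (T x)) ^ (1 - r)) := by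
            refine lintegral_mono_ae ?_
            rw [ae_restrict_iff' Metric.isClosed_closedBall.measurableSet]
            filter_upwards [hpt c s hs] with x hx hxQ
            have h1 := ENNReal.rpow_le_rpow (hx hxQ) hr1'
            rw [ENNReal.mul_rpow_of_nonneg _ _ hr1'] at h1
            calc a ^ (1 - r) * ‖f (T x) - k‖ₑ ^ r
                ≤ (Ae ^ (1 - r) * ENNReal.ofReal (ω (T x)) ^ (1 - r)) * ‖f (T x) - k‖ₑ ^ r :=
                  mul_le_mul_left h1 _
              _ = _ := by ring
        _ = Ae ^ (1 - r) * ∫⁻ x in Q, ‖f (T x) - k‖ₑ ^ r * ENNReal.ofReal (ω (T x)) ^ (1 - r) :=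
            lintegral_const_mul' _ _ hAp'
        _ ≤ Ae ^ (1 - r) * (ENNReal.ofReal N ^ r * W Q) := by gcongr
        _ = a ^ (1 - r) * ((B * a) ^ r * volume Q) := by
            rw [hB, ENNReal.mul_rpow_of_nonneg _ _ hr0.le, ENNReal.mul_rpow_of_nonneg _ _ hr0.le,
              ← ENNReal.rpow_mul, div_mul_cancel₀ _ hr0.ne', ← hav]
            have : a = a ^ (1 - r) * a ^ r := by
              rw [← ENNReal.rpow_add _ _ ha0 hat]; simp
            nth_rewrite 1 [this]
            ring) (WithLp.ofLp c) (ρ / 2) (by positivity)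
  have e2 : 2 * (ρ / 2) = ρ := by ring
  rw [hWb _ _ (by positivity), tr (fun x => ‖f x - κ (WithLp.toLp 2 (WithLp.ofLp c)) (2 * (ρ / 2))‖ₑ) _
    (by positivity), e2] at hmain
  simp only [WithLp.toLp_ofLp] at hmain
  have hfi := hf.integrableOn_isCompact (cube_compact c hρ)
  have hk : IntegrableOn (fun _ : Rn n => κ c ρ) (cube c ρ) :=
    integrableOn_const (by rw [vol_cube c hρ]; simp)
  have hfk : IntegrableOn (fun x => |f x - κ c ρ|) (cube c ρ) := (hfi.sub hk).abs
  have hw := wMeas_pos h0 hl c hρ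
  have hD0 : 0 ≤ Dc n r A := ENNReal.toReal_nonneg
  rw [← ENNReal.ofReal_le_ofReal_iff (by positivity),
    ofReal_integral_eq_lintegral_ofReal hfk (Eventually.of_forall fun x => abs_nonneg _)]
  refine le_trans (le_of_eq ?_) (hmain.trans (le_of_eq ?_))
  · refine lintegral_congr fun x => ?_
    rw [Real.enorm_eq_ofReal_abs]
  · rw [ENNReal.ofReal_mul (by positivity), ENNReal.ofReal_mul hD0, Dc, ENNReal.ofReal_toReal]
    · rw [hB]; ring
    · exact ENNReal.mul_ne_top (ENNReal.mul_ne_top (by simp) hAet)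
        (ENNReal.mul_ne_top (ENNReal.mul_ne_top (by simp) (Gc_ne_top n hr0)) hApt)

lemma integrand_eq {r : ℝ} {a w : ℝ} (ha : 0 ≤ a) (hw : 0 < w) :
    (a / w) ^ r * w = a ^ r * w ^ (1 - r) := by
  rw [Real.div_rpow ha hw.le, Real.rpow_sub hw, Real.rpow_one]
  ring

lemma final_cube {n : ℕ} {r A : ℝ} (hr0 : 0 < r) (hr1 : r < 1) {ω f : Rn n → ℝ} (hω : IsA1 ω A)
    (hf : LocallyIntegrable f volume) {N D : ℝ} (hN : 0 < N) (hD : 0 ≤ D) (k : ℝ)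
    (c : Rn n) {ρ : ℝ} (hρ : 0 < ρ)
    (hk1 : ∫ x in cube c ρ, |f x - k| ^ r * ω x ^ (1 - r) ≤ N ^ r * wMeas ω (cube c ρ))
    (hk2 : ∫ x in cube c ρ, |f x - k| ≤ D * N * wMeas ω (cube c ρ)) :
    ((wMeas ω (cube c ρ))⁻¹ * ∫ x in cube c ρ, |f x - avg f c ρ| ^ r * ω x ^ (1 - r)) ^ (1 / r)
      ≤ (1 + D ^ r) ^ (1 / r) * N := by
  obtain ⟨h0, hl, -, -⟩ := hω
  have hw := wMeas_pos h0 hl c hρ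
  set w := wMeas ω (cube c ρ) with hwd
  set m := avg f c ρ with hm
  have hρn : 0 < ρ ^ n := by positivity
  have hvol : (volume : Measure (Rn n)).real (cube c ρ) = ρ ^ n := by
    rw [Measure.real, vol_cube c hρ, ENNReal.toReal_ofReal hρn.le]
  have hfi := hf.integrableOn_isCompact (cube_compact c hρ)
  have hi := hl.integrableOn_isCompact (cube_compact c hρ)
  have hkc : ∀ k : ℝ, IntegrableOn (fun _ : Rn n => k) (cube c ρ) := fun k =>
    integrableOn_const (by rw [vol_cube c hρ]; simp)
  set t := w / ρ ^ n with ht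
  have ht0 : 0 < t := by positivity
  have hmk : |k - m| ≤ D * N * t := by
    have e1 : m - k = (∫ x in cube c ρ, (f x - k)) / ρ ^ n := by
      rw [integral_sub hfi (hkc k), setIntegral_const, hvol, hm, avg, smul_eq_mul]
      field_simp
    rw [abs_sub_comm, e1, abs_div, abs_of_pos hρn, ht, ← mul_div_assoc]
    gcongr
    exact abs_integral_le_integral_abs.trans hk2
  have hωi : IntegrableOn (fun x => t ^ r * ω x ^ (1 - r)) (cube c ρ) := by
    have := int_mix hr0 hr1 h0 hl (locallyIntegrable_const (μ := (volume : Measure (Rn n))) t) 0 c hρ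
    simpa [abs_of_pos ht0] using this
  have hω1 : ∫ x in cube c ρ, t ^ r * ω x ^ (1 - r) ≤ w := by
    calc ∫ x in cube c ρ, t ^ r * ω x ^ (1 - r) ≤ ∫ x in cube c ρ, (r * t + (1 - r) * ω x) := by
          refine integral_mono hωi ((hkc _).add (hi.const_mul _)) fun x => ?_
          exact Real.geom_mean_le_arith_mean2_weighted hr0.le (by linarith) ht0.le (h0 x).le (by ring)
      _ = r * t * ρ ^ n + (1 - r) * w := by
          rw [integral_add (hkc _) (hi.const_mul _), setIntegral_const, hvol, integral_const_mul,
            smul_eq_mul, hwd, wMeas]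
          ring
      _ = w := by rw [ht]; field_simp; ring
  have hmain : ∫ x in cube c ρ, |f x - m| ^ r * ω x ^ (1 - r) ≤ (1 + D ^ r) * N ^ r * w := by
    calc ∫ x in cube c ρ, |f x - m| ^ r * ω x ^ (1 - r)
        ≤ ∫ x in cube c ρ, (|f x - k| ^ r * ω x ^ (1 - r) + (D * N) ^ r * (t ^ r * ω x ^ (1 - r))) := by
          refine integral_mono (int_mix hr0 hr1 h0 hl hf m c hρ)
            ((int_mix hr0 hr1 h0 hl hf k c hρ).add (hωi.const_mul _)) fun x => ?_
          have hx : 0 ≤ ω x ^ (1 - r) := Real.rpow_nonneg (h0 x).le _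
          have h1 : |f x - m| ^ r ≤ |f x - k| ^ r + (D * N * t) ^ r := by
            refine le_trans ?_ (Real.rpow_add_le_add_rpow (abs_nonneg _) (by positivity) hr0.le hr1.le)
            refine Real.rpow_le_rpow (abs_nonneg _) ?_ hr0.le
            exact (abs_sub_le _ k _).trans (by gcongr)
          rw [Real.mul_rpow (by positivity) ht0.le] at h1
          simp only
          nlinarith [mul_le_mul_of_nonneg_right h1 hx]
      _ = (∫ x in cube c ρ, |f x - k| ^ r * ω x ^ (1 - r)) +
            (D * N) ^ r * ∫ x in cube c ρ, t ^ r * ω x ^ (1 - r) := by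
          rw [integral_add (int_mix hr0 hr1 h0 hl hf k c hρ) (hωi.const_mul _), integral_const_mul]
      _ ≤ N ^ r * w + (D * N) ^ r * w := by gcongr
      _ = _ := by rw [Real.mul_rpow hD hN.le]; ring
  have hnn : 0 ≤ ∫ x in cube c ρ, |f x - m| ^ r * ω x ^ (1 - r) :=
    integral_nonneg fun x => by
      have := (h0 x).le
      simp only [Pi.zero_apply]; positivity
  have hp : 0 ≤ 1 / r := by positivity
  have hN' : N = (N ^ r) ^ (1 / r) := by
    rw [← Real.rpow_mul hN.le, mul_one_div_cancel hr0.ne', Real.rpow_one]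
  rw [hN', ← Real.mul_rpow (by positivity) (by positivity)]
  refine Real.rpow_le_rpow (by positivity) ?_ hp
  rw [inv_mul_le_iff₀ hw, mul_comm w]
  exact hmain


end Helpers

open Filter

/-- for `ω ∈ A₁` and `0 < r < 1`, the quantities `‖f‖_{BMO^r(ω)}`
(oscillation around the average) and `‖f‖_{BMO_r(ω)}` (infimal oscillation) are equivalent,
with constant depending only on `n`, `r`, `[ω]_{A₁}`. -/
theorem stmt2 (n : ℕ) (r A : ℝ) (hr0 : 0 < r) (hr1 : r < 1) (hA : 1 ≤ A) :
    ∃ C : ℝ, 1 ≤ C ∧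
      ∀ (ω f : Rn n → ℝ), IsA1 ω A → LocallyIntegrable f volume →
        -- `‖f‖_{BMO_r(ω)} ≤ ‖f‖_{BMO^r(ω)}` (cube by cube)
        ((∀ (c : Rn n) (ρ : ℝ), 0 < ρ →
            (⨅ k : ℝ, ((wMeas ω (cube c ρ))⁻¹ *
              ∫ x in cube c ρ, (|f x - k| / ω x) ^ r * ω x) ^ (1 / r)) ≤
            ((wMeas ω (cube c ρ))⁻¹ *
              ∫ x in cube c ρ, |f x - avg f c ρ| ^ r * ω x ^ (1 - r)) ^ (1 / r)) ∧
        -- `‖f‖_{BMO^r(ω)} ≤ C ‖f‖_{BMO_r(ω)}`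
        (∀ N : ℝ, 0 ≤ N →
          (∀ (c : Rn n) (ρ : ℝ), 0 < ρ →
            (⨅ k : ℝ, ((wMeas ω (cube c ρ))⁻¹ *
              ∫ x in cube c ρ, (|f x - k| / ω x) ^ r * ω x) ^ (1 / r)) ≤ N) →
          ∀ (c : Rn n) (ρ : ℝ), 0 < ρ →
            ((wMeas ω (cube c ρ))⁻¹ *
              ∫ x in cube c ρ, |f x - avg f c ρ| ^ r * ω x ^ (1 - r)) ^ (1 / r) ≤ C * N)) := by
  have hD : 0 ≤ Dc n r A := ENNReal.toReal_nonneg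
  refine ⟨(1 + Dc n r A ^ r) ^ (1 / r), ?_, ?_⟩
  · apply Real.one_le_rpow _ (by positivity)
    have := Real.rpow_nonneg hD r
    linarith
  intro ω f hω hf
  have h0 := hω.1
  have hl := hω.2.1
  have heq : ∀ (c : Rn n) (ρ k : ℝ), ∫ x in cube c ρ, (|f x - k| / ω x) ^ r * ω x =
      ∫ x in cube c ρ, |f x - k| ^ r * ω x ^ (1 - r) := fun c ρ k =>
    integral_congr_ae (Eventually.of_forall fun x => integrand_eq (abs_nonneg _) (h0 x))
  have hnn : ∀ (c : Rn n) (ρ k : ℝ), 0 ≤ ∫ x in cube c ρ, |f x - k| ^ r * ω x ^ (1 - r) := by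
    intro c ρ k
    refine integral_nonneg fun x => ?_
    have := (h0 x).le
    simp only [Pi.zero_apply]; positivity
  simp only [heq]
  constructor
  · intro c ρ hρ
    have hw := wMeas_pos h0 hl c hρ
    refine ciInf_le ⟨0, ?_⟩ (avg f c ρ)
    rintro _ ⟨k, rfl⟩
    have := hnn c ρ k
    simp only
    positivity
  · intro N hN hosc c ρ hρ
    have key : ∀ ε : ℝ, 0 < ε → ((wMeas ω (cube c ρ))⁻¹ *
        ∫ x in cube c ρ, |f x - avg f c ρ| ^ r * ω x ^ (1 - r)) ^ (1 / r) ≤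
        (1 + Dc n r A ^ r) ^ (1 / r) * (N + ε) := by
      intro ε hε
      have hNε : 0 < N + ε := by linarith
      have hex : ∀ (c : Rn n) (ρ : ℝ), ∃ k : ℝ, 0 < ρ →
          ∫ x in cube c ρ, |f x - k| ^ r * ω x ^ (1 - r) ≤ (N + ε) ^ r * wMeas ω (cube c ρ) := by
        intro c ρ
        by_cases hρ : 0 < ρ
        · obtain ⟨k, hk⟩ := exists_lt_of_ciInf_lt ((hosc c ρ hρ).trans_lt (show N < N + ε by linarith))
          refine ⟨k, fun _ => ?_⟩
          have hw := wMeas_pos h0 hl c hρ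
          have hX : 0 ≤ (wMeas ω (cube c ρ))⁻¹ * ∫ x in cube c ρ, |f x - k| ^ r * ω x ^ (1 - r) :=
            mul_nonneg (by positivity) (hnn c ρ k)
          have h1 := Real.rpow_le_rpow (Real.rpow_nonneg hX _) hk.le hr0.le
          rw [← Real.rpow_mul hX, one_div_mul_cancel hr0.ne', Real.rpow_one,
            inv_mul_le_iff₀ hw, mul_comm] at h1
          exact h1
        · exact ⟨0, fun h => absurd h hρ⟩
      choose κ hκ using hex
      exact final_cube hr0 hr1 hω hf hNε hD (κ c ρ) c hρ (hκ c ρ hρ)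
        (core_Rn hr0 hr1 hω hf hNε κ hκ c ρ hρ)
    refine le_of_tendsto_of_tendsto' (f := fun _ : ℕ => _) (b := atTop)
      (g := fun j : ℕ => (1 + Dc n r A ^ r) ^ (1 / r) * (N + 1 / ((j : ℝ) + 1)))
      tendsto_const_nhds ?_ (fun j => key _ (by positivity))
    have := (tendsto_one_div_add_atTop_nhds_zero_nat (𝕜 := ℝ)).const_add N
    rw [add_zero] at this
    exact this.const_mul _
end
end
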